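/- Fix finite nonempty sets S₀, S₁, S₂ ⊂ ℕ with gcd of the nonzero elements of S₀ ∪ S₁ ∪ S₂ equal to 1 and u := max(b_{0R}, b_{1R}, b_{2R}) ≥ 1, where b_{iL} = min S_i, b_{iR} = max S_i. Suppose {i,j,k} = {0,1,2} are such that 0 < b_{iL}, b_{iR} = u, b_{jL} = 0, b_{jR} < u, and 0 < b_{kL} ≤ b_{kR} < u. Then for generic coefficients, the Newton polygon N(φ) of every irreducible φ ∈ ℂ[x,y] with φ(P₀/Q, P₁/Q) = 0 in ℂ(t) equals the convex hull of the five implicit points given in (e_i, e_j)-coordinates by (b_{jR}, 0), (b_{kR}, u − b_{kR}), (b_{kL}, u − b_{kL}), (0, u − b_{iL}), (0, 0). -/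

import Mathlib

open Polynomial

/-- The univariate polynomial with support `S` and coefficient vector `c`. -/
noncomputable def polyOfCoeffs (S : Finset ℕ) (c : {s // s ∈ S} → ℂ) : Polynomial ℂ :=
  ∑ s ∈ S.attach, Polynomial.C (c s) * Polynomial.X ^ (s : ℕ)

/-- The image of that polynomial in the field of rational functions `ℂ(t)`. -/
noncomputable def ratFuncOf (S : Finset ℕ) (c : {s // s ∈ S} → ℂ) : RatFunc ℂ :=
  algebraMap (Polynomial ℂ) (RatFunc ℂ) (polyOfCoeffs S c)

/-- The Newton polygon of a bivariate polynomial: the convex hull in `ℝ²` of its support. -/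
noncomputable def newtonPolygon (φ : MvPolynomial (Fin 2) ℂ) : Set (ℝ × ℝ) :=
  convexHull ℝ ((fun d : Fin 2 →₀ ℕ => ((d 0 : ℝ), (d 1 : ℝ))) '' ↑φ.support)

/-- `φ(P₀/Q, P₁/Q) = 0` in `ℂ(t)`, where `P₀, P₁, Q` have supports `S 0, S 1, S 2`
and coefficient vector `c`. -/
def vanishesSame (S : Fin 3 → Finset ℕ)
    (c : (Σ i : Fin 3, {s // s ∈ S i}) → ℂ) (φ : MvPolynomial (Fin 2) ℂ) : Prop :=
  MvPolynomial.aeval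
    ![ratFuncOf (S 0) (fun s => c ⟨0, s⟩) / ratFuncOf (S 2) (fun s => c ⟨2, s⟩),
      ratFuncOf (S 1) (fun s => c ⟨1, s⟩) / ratFuncOf (S 2) (fun s => c ⟨2, s⟩)] φ = 0

/-- The implicit point determined by a pair `(a, b)` given in `(e_i, e_j)`-coordinates:
the triple `(e₀, e₁, e₂)` has `e_i = a`, `e_j = b` and `e_k = u - a - b`, and the implicit
point is `(e₀, e₁) ∈ ℝ²`. -/
def implicitPoint (i j : Fin 3) (u a b : ℕ) : ℝ × ℝ :=
  (((if (0 : Fin 3) = i then a else if (0 : Fin 3) = j then b else u - a - b : ℕ) : ℝ),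
   ((if (1 : Fin 3) = i then a else if (1 : Fin 3) = j then b else u - a - b : ℕ) : ℝ))


section
open Polynomial

/-- All monomials `x^e z^m` of `p ∈ ℂ[x][z]` have weight `a e + c m ≥ w`. -/
def Wt (a c : ℕ) (w : ℤ) (p : Polynomial (Polynomial ℂ)) : Prop :=
  ∀ m e : ℕ, (p.coeff m).coeff e ≠ 0 → w ≤ (a : ℤ) * e + (c : ℤ) * m

lemma Wt.mono {a c : ℕ} {w w' : ℤ} {p} (h : Wt a c w p) (hw : w' ≤ w) : Wt a c w' p :=
  fun m e hme => hw.trans (h m e hme)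

lemma Wt.zero (a c : ℕ) (w : ℤ) : Wt a c w 0 := fun m e h => by simp at h

lemma Wt.nonneg (a c : ℕ) {w : ℤ} (hw : w ≤ 0) (p) : Wt a c w p := fun m e _ => by
  have : (0 : ℤ) ≤ (a : ℤ) * e + (c : ℤ) * m := by positivity
  omega

lemma Wt.add {a c : ℕ} {w : ℤ} {p q} (hp : Wt a c w p) (hq : Wt a c w q) : Wt a c w (p + q) := by
  intro m e h
  rw [coeff_add, coeff_add] at h
  by_cases h1 : (p.coeff m).coeff e = 0
  · exact hq m e (by intro h2; simp [h1, h2] at h)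
  · exact hp m e h1

lemma Wt.sum {a c : ℕ} {w : ℤ} {ι : Type*} (s : Finset ι) (f : ι → Polynomial (Polynomial ℂ))
    (hf : ∀ i ∈ s, Wt a c w (f i)) : Wt a c w (∑ i ∈ s, f i) := by
  classical
  induction s using Finset.induction_on with
  | empty => simpa using Wt.zero a c w
  | insert i s hi ih =>
    rw [Finset.sum_insert hi]
    exact (hf i (by simp)).add (ih fun j hj => hf j (by simp [hj]))

lemma Wt.mul {a c : ℕ} {w v : ℤ} {p q} (hp : Wt a c w p) (hq : Wt a c v q) :
    Wt a c (w + v) (p * q) := by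
  intro m e h
  rw [coeff_mul, finsetSum_coeff] at h
  obtain ⟨⟨m1, m2⟩, hm, h⟩ := Finset.exists_ne_zero_of_sum_ne_zero h
  rw [coeff_mul] at h
  obtain ⟨⟨e1, e2⟩, he, h⟩ := Finset.exists_ne_zero_of_sum_ne_zero h
  have h1 := hp m1 e1 (left_ne_zero_of_mul h)
  have h2 := hq m2 e2 (right_ne_zero_of_mul h)
  rw [Finset.HasAntidiagonal.mem_antidiagonal] at hm he
  simp only at hm he
  subst hm; subst he
  push_cast
  linarith

lemma Wt.prod {a c : ℕ} {ι : Type*} (s : Finset ι) (w : ι → ℤ)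
    (f : ι → Polynomial (Polynomial ℂ))
    (hf : ∀ i ∈ s, Wt a c (w i) (f i)) : Wt a c (∑ i ∈ s, w i) (∏ i ∈ s, f i) := by
  classical
  induction s using Finset.induction_on with
  | empty => simpa using Wt.nonneg a c le_rfl 1
  | insert i s hi ih =>
    rw [Finset.sum_insert hi, Finset.prod_insert hi]
    exact (hf i (by simp)).mul (ih fun j hj => hf j (by simp [hj]))

lemma Wt.det {a c : ℕ} {ι : Type*} [Fintype ι] [DecidableEq ι]
    (M : Matrix ι ι (Polynomial (Polynomial ℂ))) (y z : ι → ℤ)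
    (hM : ∀ i j, Wt a c (y i + z j) (M i j)) : Wt a c (∑ i, y i + ∑ i, z i) M.det := by
  rw [Matrix.det_apply]
  refine Wt.sum _ _ fun σ _ => ?_
  have h1 := Wt.prod (a := a) (c := c) Finset.univ (fun i => y (σ i) + z i)
    (fun i => M (σ i) i) (fun i _ => hM _ _)
  rw [Finset.sum_add_distrib, Equiv.sum_comp σ y] at h1
  have h2 : Wt a c 0 (((Equiv.Perm.sign σ : ℤˣ) : ℤ) : Polynomial (Polynomial ℂ)) :=
    Wt.nonneg a c le_rfl _
  have h3 := h2.mul h1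
  rw [zero_add] at h3
  rwa [Units.smul_def, zsmul_eq_mul]

lemma sum_trunc (k N : ℕ) (h : k ≤ N) :
    2 * ∑ i : Fin N, ((k - (i : ℕ) : ℕ) : ℤ) = (k : ℤ) * (k + 1) := by
  rw [Fin.sum_univ_eq_sum_range (fun i => ((k - i : ℕ) : ℤ)) N]
  induction k generalizing N with
  | zero => simp
  | succ k ih =>
    obtain ⟨N, rfl⟩ : ∃ M, N = M + 1 := ⟨N - 1, by omega⟩
    rw [Finset.sum_range_succ']
    have h1 := ih N (by omega)
    have h2 : ∀ i, k + 1 - (i + 1) = k - i := fun i => by omega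
    rw [Finset.sum_congr rfl (fun i _ => congrArg (Nat.cast (R := ℤ)) (h2 i)), mul_add, h1]
    push_cast
    ring

/-- `A(t) - x B(t)` over `ℂ[x][z]`. -/
noncomputable def fX (A B : ℂ[X]) : Polynomial (Polynomial (Polynomial ℂ)) :=
  A.map (C.comp C) - C (C X) * B.map (C.comp C)

/-- `D(t) - z B(t)` over `ℂ[x][z]`. -/
noncomputable def gZ (D B : ℂ[X]) : Polynomial (Polynomial (Polynomial ℂ)) :=
  D.map (C.comp C) - C X * B.map (C.comp C)

/-- The resultant of `A - xB` and `D - zB`. -/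
noncomputable def RR (A B D : ℂ[X]) (u : ℕ) : Polynomial (Polynomial ℂ) :=
  resultant (fX A B) (gZ D B) u u

lemma Wt_fX (a c : ℕ) (A B : ℂ[X]) (hA : ∀ l < a, A.coeff l = 0) (l : ℕ) (hl : l < a) :
    Wt a c a ((fX A B).coeff l) := by
  intro m e h
  have h' : ((C X * C (C (B.coeff l)) : Polynomial (Polynomial ℂ)).coeff m).coeff e ≠ 0 := by
    intro h0
    apply h
    rw [coeff_C_mul] at h0
    simp only [fX, coeff_sub, coeff_map, hA l hl, coeff_C_mul, map_zero, zero_sub,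
      RingHom.comp_apply, coeff_neg, h0, neg_zero]
  rw [← C_mul, coeff_C] at h'
  split_ifs at h' with hm
  · rw [X_mul_C, coeff_C_mul, coeff_X] at h'
    split_ifs at h' with he
    · subst hm; subst he; simp
    · simp at h'
  · simp at h'

lemma Wt_gZ (a c : ℕ) (D B : ℂ[X]) (hD : ∀ l < c, D.coeff l = 0) (l : ℕ) (hl : l < c) :
    Wt a c c ((gZ D B).coeff l) := by
  intro m e h
  have h' : ((X * C (C (B.coeff l)) : Polynomial (Polynomial ℂ)).coeff m).coeff e ≠ 0 := by
    intro h0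
    apply h
    simp only [gZ, coeff_sub, coeff_map, hD l hl, coeff_C_mul, map_zero, zero_sub,
      RingHom.comp_apply, coeff_neg, h0, neg_zero]
  rw [coeff_mul_C, coeff_X] at h'
  split_ifs at h' with hm
  · rw [one_mul, coeff_C] at h'
    split_ifs at h' with he
    · subst hm; subst he; simp
    · simp at h'
  · simp at h'

lemma Wt_RR (A B D : ℂ[X]) (u a c : ℕ) (ha : a ≤ u) (hc : c ≤ u)
    (hA : ∀ l < a, A.coeff l = 0) (hD : ∀ l < c, D.coeff l = 0) :
    Wt a c (a * c) (RR A B D u) := by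
  have key := Wt.det (a := a) (c := c) (sylvester (fX A B) (gZ D B) u u)
    (fun i => ((a + c - (i : ℕ) : ℕ) : ℤ))
    (fun j => Fin.addCases (motive := fun _ => ℤ) (fun j₁ => -((a - (j₁ : ℕ) : ℕ) : ℤ))
      (fun j₁ => -((c - (j₁ : ℕ) : ℕ) : ℤ)) j) ?_
  · refine key.mono (le_of_eq ?_)
    rw [Fin.sum_univ_add (f := fun j => Fin.addCases (motive := fun _ => ℤ) _ _ j)]
    simp only [Fin.addCases_left, Fin.addCases_right, Finset.sum_neg_distrib]
    have h1 := sum_trunc (a + c) (u + u) (by omega)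
    have h2 := sum_trunc a u ha
    have h3 := sum_trunc c u hc
    push_cast at h1
    linarith
  · intro i j
    induction j using Fin.addCases with
    | left j =>
      simp only [sylvester, Matrix.of_apply, Fin.addCases_left, Set.mem_Icc]
      split_ifs with hij
      · by_cases h : (i : ℕ) - j < c
        · refine (Wt_gZ a c D B hD _ h).mono ?_
          omega
        · refine Wt.nonneg _ _ ?_ _
          omega
      · exact Wt.zero _ _ _
    | right j =>
      simp only [sylvester, Matrix.of_apply, Fin.addCases_right, Set.mem_Icc]
      split_ifs with hij
      · by_cases h : (i : ℕ) - j < a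
        · refine (Wt_fX a c A B hA _ h).mono ?_
          omega
        · refine Wt.nonneg _ _ ?_ _
          omega
      · exact Wt.zero _ _ _

end

section
open Polynomial

lemma lin_prod {R ι : Type*} [CommRing R] (s : Multiset ι) (p q : ι → R) :
    ((s.map fun τ => C (p τ) - X * C (q τ)).prod).natDegree ≤ s.card ∧
    ((s.map fun τ => C (p τ) - X * C (q τ)).prod).coeff s.card = (s.map fun τ => - q τ).prod := by
  have hl : ∀ f ∈ s.map (fun τ => C (p τ) - X * C (q τ)), f.natDegree ≤ 1 := by
    intro f hf
    obtain ⟨τ, -, rfl⟩ := Multiset.mem_map.1 hf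
    compute_degree
  constructor
  · refine (natDegree_multiset_prod_le _).trans ?_
    refine (Multiset.sum_le_card_nsmul _ 1 ?_).trans ?_
    · intro x hx
      obtain ⟨f, hf, rfl⟩ := Multiset.mem_map.1 hx
      exact hl f hf
    · simp
  · have := coeff_multiset_prod_of_natDegree_le _ 1 hl
    simpa [coeff_X, coeff_C] using this

lemma res_num (P Q B : ℂ[X]) (n : ℕ) (hQ : Q.natDegree ≤ n) (hB : B.natDegree ≤ n) :
    resultant (P.map C) (Q.map C - C X * B.map C) P.natDegree n =
      C (P.leadingCoeff) ^ n * (P.roots.map fun τ => C (Q.eval τ) - X * C (B.eval τ)).prod := by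
  have hs : P.Splits := IsAlgClosed.splits P
  have h := resultant_eq_prod_eval (P.map (C : ℂ →+* ℂ[X])) (Q.map C - C X * B.map C) n ?_ (hs.map C)
  · rw [natDegree_map_eq_of_injective C_injective,
      leadingCoeff_map_of_injective C_injective] at h
    rw [h, hs.roots_map_of_injective C_injective, Multiset.map_map]
    congr 2
    apply Multiset.map_congr rfl
    intro τ _
    simp
  · refine (natDegree_sub_le _ _).trans (max_le (natDegree_map_le.trans hQ) ?_)
    exact (natDegree_C_mul_le _ _).trans (natDegree_map_le.trans hB)

lemma res_num_coeff (P Q B : ℂ[X]) (n a : ℕ) (hP : P ≠ 0) (hQ : Q.natDegree ≤ n)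
    (hB : B.natDegree ≤ n) (ha : P.rootMultiplicity 0 = a) (hQ0 : Q.eval 0 = 0)
    (hPB : ∀ τ, P.eval τ = 0 → B.eval τ ≠ 0)
    (hPQ : ∀ τ, τ ≠ 0 → P.eval τ = 0 → Q.eval τ ≠ 0) :
    (resultant (P.map C) (Q.map C - C X * B.map C) P.natDegree n).coeff P.natDegree ≠ 0 ∧
    (resultant (P.map C) (Q.map C - C X * B.map C) P.natDegree n).coeff a ≠ 0 := by
  classical
  rw [res_num P Q B n hQ hB, ← C_pow, coeff_C_mul, coeff_C_mul]
  have hl : P.leadingCoeff ^ n ≠ 0 := pow_ne_zero _ (leadingCoeff_ne_zero.2 hP)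
  have hcard : P.roots.card = P.natDegree := (splits_iff_card_roots.1 (IsAlgClosed.splits P))
  constructor
  · apply mul_ne_zero hl
    rw [← hcard, (lin_prod _ _ _).2]
    apply Multiset.prod_ne_zero
    intro h0
    obtain ⟨τ, hτ, h⟩ := Multiset.mem_map.1 h0
    exact hPB τ (isRoot_of_mem_roots hτ) (neg_eq_zero.1 h)
  · apply mul_ne_zero hl
    by_cases h0 : P.eval 0 = 0
    swap
    · have ha0 : a = 0 := by
        rw [← ha]; exact rootMultiplicity_eq_zero h0
      rw [ha0, coeff_zero_eq_eval_zero, eval_multiset_prod, Multiset.map_map]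
      apply Multiset.prod_ne_zero
      intro h1
      obtain ⟨τ, hτ, h⟩ := Multiset.mem_map.1 h1
      have hr : P.eval τ = 0 := isRoot_of_mem_roots hτ
      refine hPQ τ ?_ hr (by simpa using h)
      rintro rfl; exact h0 hr
    have hB0 := hPB 0 h0
    have hsplit := Multiset.filter_add_not (fun τ => (0 : ℂ) = τ) P.roots
    rw [← hsplit, Multiset.map_add, Multiset.prod_add, Multiset.filter_eq, count_roots, ha,
      Multiset.map_replicate, Multiset.prod_replicate, hQ0, map_zero, zero_sub, neg_pow, mul_pow,
      ← mul_assoc, mul_comm _ (C _ ^ a), mul_comm _ (X ^ a), ← mul_assoc, mul_right_comm, ← C_pow,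
      mul_comm (C _), mul_assoc, mul_assoc, coeff_X_pow_mul', if_pos le_rfl, Nat.sub_self,
      coeff_zero_eq_eval_zero, eval_mul, eval_mul, eval_multiset_prod, Multiset.map_map]
    refine mul_ne_zero (by simp [hB0]) (mul_ne_zero ?_ ?_)
    · apply Multiset.prod_ne_zero
      intro h1
      obtain ⟨τ, hτ, h⟩ := Multiset.mem_map.1 h1
      rw [Multiset.mem_filter] at hτ
      have hr : P.eval τ = 0 := isRoot_of_mem_roots hτ.1
      exact hPQ τ (Ne.symm hτ.2) hr (by simpa using h)
    · simp

end

section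
open Polynomial

structure Good (A B D : ℂ[X]) (u : ℕ) : Prop where
  hA : A.natDegree = u
  hB : B.natDegree < u
  hD : D.natDegree < u
  hA0 : A.eval 0 = 0
  hD0 : D.eval 0 = 0
  hB0 : B.eval 0 ≠ 0
  hDne : D ≠ 0
  hAB : ∀ τ, A.eval τ = 0 → B.eval τ ≠ 0
  hDB : ∀ τ, D.eval τ = 0 → B.eval τ ≠ 0
  hAD : ∀ τ, τ ≠ 0 → A.eval τ = 0 → D.eval τ ≠ 0
  hz : ∀ ζ : ℂ, (∀ s, A.coeff s ≠ 0 → ζ ^ s = 1) → (∀ s, B.coeff s ≠ 0 → ζ ^ s = 1) →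
    (∀ s, D.coeff s ≠ 0 → ζ ^ s = 1) → ζ = 1

namespace Good
variable {A B D : ℂ[X]} {u : ℕ}

lemma upos (h : Good A B D u) : 0 < u := by have := h.hB; omega

lemma hAne (h : Good A B D u) : A ≠ 0 := by
  rintro rfl; have := h.hA; have := h.upos; simp at *; omega

lemma hBne (h : Good A B D u) : B ≠ 0 := by
  rintro rfl; exact h.hB0 (by simp)

/-- Setting `x = 0` in `RR`. -/
lemma RR_x0 (h : Good A B D u) :
    ((RR A B D u).coeff u).coeff 0 ≠ 0 ∧
    ((RR A B D u).coeff (A.rootMultiplicity 0)).coeff 0 ≠ 0 := by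
  have key : (RR A B D u).map (evalRingHom 0) =
      resultant (A.map C) (D.map C - C X * B.map C) A.natDegree u := by
    rw [RR, ← coe_mapRingHom, ← resultant_map_map, h.hA]
    congr 1
    · simp only [fX, Polynomial.map_sub, Polynomial.map_mul, map_C, Polynomial.map_map]
      have : (mapRingHom (evalRingHom (0:ℂ))) (C X) = 0 := by simp
      rw [this]
      simp
      congr 1
      ext x n; simp
    · simp only [gZ, Polynomial.map_sub, Polynomial.map_mul, map_C, Polynomial.map_map]
      have : (mapRingHom (evalRingHom (0:ℂ))) X = X := by simp
      have h2 : ((mapRingHom (evalRingHom (0:ℂ))).comp (C.comp C)) = C := by ext x n; simp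
      rw [this, h2]
  have := res_num_coeff A D B u _ h.hAne h.hD.le h.hB.le rfl h.hD0 h.hAB h.hAD
  rw [← key] at this
  simpa [h.hA, coeff_zero_eq_eval_zero] using this

/-- Setting `z = 0` in `RR`. -/
lemma RR_z0 (h : Good A B D u) :
    ((RR A B D u).coeff 0).coeff D.natDegree ≠ 0 ∧
    ((RR A B D u).coeff 0).coeff (D.rootMultiplicity 0) ≠ 0 := by
  have key : (RR A B D u).coeff 0 =
      resultant (A.map C - C X * B.map C) (D.map C) u u := by
    rw [RR, coeff_zero_eq_eval_zero, ← coe_evalRingHom, ← resultant_map_map]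
    have h2 : ((evalRingHom (0:ℂ[X])).comp (C.comp C)) = C := by ext x n; simp
    congr 1
    · simp only [fX, Polynomial.map_sub, Polynomial.map_mul, map_C, Polynomial.map_map, h2]
      simp
    · simp only [gZ, Polynomial.map_sub, Polynomial.map_mul, map_C, Polynomial.map_map, h2]
      simp
  have hnd : (A.map C - C X * B.map C : ℂ[X][X]).coeff u = C A.leadingCoeff := by
    rw [coeff_sub, coeff_C_mul, coeff_map, coeff_map, coeff_eq_zero_of_natDegree_lt h.hB,
      leadingCoeff, h.hA]
    simp
  obtain ⟨k, hk⟩ : ∃ k, u = D.natDegree + k := ⟨u - D.natDegree, by have := h.hD; omega⟩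
  have e2 : resultant (D.map C) (A.map C - C X * B.map C) u u =
     C ((-1) ^ (u * k) * A.leadingCoeff ^ k) *
       resultant (D.map C) (A.map C - C X * B.map C) D.natDegree u := by
    have := resultant_add_left_deg (D.map C) (A.map C - C X * B.map C) D.natDegree u k
      natDegree_map_le
    rw [← hk, hnd] at this
    rw [this]; simp
  have e1 : ((-1 : ℂ[X]) ^ (u * u)) = C ((-1) ^ (u * u)) := by simp
  rw [key, resultant_comm, e2, e1, coeff_C_mul, coeff_C_mul, coeff_C_mul, coeff_C_mul]
  have := res_num_coeff D A B u _ h.hDne h.hA.le h.hB.le rfl h.hA0 h.hDB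
    (fun τ h0 hd ha => h.hAD τ h0 ha hd)
  have hl : A.leadingCoeff ≠ 0 := leadingCoeff_ne_zero.2 h.hAne
  simp [this, hl]
  
end Good

lemma res_num_gen {K : Type*} [Field K] [IsAlgClosed K] (P Q B : K[X]) (n : ℕ)
    (hQ : Q.natDegree ≤ n) (hB : B.natDegree ≤ n) :
    resultant (P.map C) (Q.map C - C X * B.map C) P.natDegree n =
      C (P.leadingCoeff) ^ n * (P.roots.map fun τ => C (Q.eval τ) - X * C (B.eval τ)).prod := by
  have hs : P.Splits := IsAlgClosed.splits P
  have h := resultant_eq_prod_eval (P.map (C : K →+* K[X])) (Q.map C - C X * B.map C) n ?_ (hs.map C)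
  · rw [natDegree_map_eq_of_injective C_injective,
      leadingCoeff_map_of_injective C_injective] at h
    rw [h, hs.roots_map_of_injective C_injective, Multiset.map_map]
    congr 2
    apply Multiset.map_congr rfl
    intro τ _
    simp
  · refine (natDegree_sub_le _ _).trans (max_le (natDegree_map_le.trans hQ) ?_)
    exact (natDegree_C_mul_le _ _).trans (natDegree_map_le.trans hB)

lemma Good.RR_top {A B D : ℂ[X]} {u : ℕ} (h : Good A B D u) :
    (RR A B D u).natDegree ≤ u ∧ ∃ κ : ℂ, κ ≠ 0 ∧ (RR A B D u).coeff u = C κ := by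
  let EE := AlgebraicClosure (FractionRing ℂ[X])
  let ι : ℂ[X] →+* EE := (algebraMap (FractionRing ℂ[X]) EE).comp (algebraMap _ _)
  have hι : Function.Injective ι :=
    (algebraMap (FractionRing ℂ[X]) EE).injective.comp (IsFractionRing.injective _ _)
  let P : EE[X] := A.map (ι.comp C) - C (ι X) * B.map (ι.comp C)
  have hιC : Function.Injective (ι.comp C) := hι.comp C_injective
  have hPn : P.natDegree = u := by
    have : (C (ι X) * B.map (ι.comp C)).natDegree < (A.map (ι.comp C)).natDegree := by
      rw [natDegree_map_eq_of_injective hιC, h.hA]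
      exact (natDegree_C_mul_le _ _).trans_lt (natDegree_map_le.trans_lt h.hB)
    rw [natDegree_sub_eq_left_of_natDegree_lt this, natDegree_map_eq_of_injective hιC, h.hA]
  have key : (RR A B D u).map ι = resultant (P.map C)
      ((D.map (ι.comp C)).map C - C X * (B.map (ι.comp C)).map C) P.natDegree u := by
    rw [RR, ← coe_mapRingHom, ← resultant_map_map, hPn]
    have h2 : (mapRingHom ι).comp (C.comp C) = C.comp (ι.comp C) := by ext x n; simp
    congr 1
    · simp only [P, fX, Polynomial.map_sub, Polynomial.map_mul, map_C, Polynomial.map_map, h2]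
      simp
    · simp only [gZ, Polynomial.map_sub, Polynomial.map_mul, map_C, Polynomial.map_map, h2]
      simp
  have hDu : (D.map (ι.comp C)).natDegree ≤ u := natDegree_map_le.trans h.hD.le
  have hBu : (B.map (ι.comp C)).natDegree ≤ u := natDegree_map_le.trans h.hB.le
  rw [res_num_gen _ _ _ _ hDu hBu] at key
  have hc : P.roots.card = u := by
    rw [← hPn]; exact (splits_iff_card_roots.1 (IsAlgClosed.splits P))
  have hl := lin_prod P.roots (fun τ => (D.map (ι.comp C)).eval τ)
    (fun τ => (B.map (ι.comp C)).eval τ)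
  rw [hc] at hl
  refine ⟨?_, ?_⟩
  · rw [← natDegree_map_eq_of_injective hι, key, ← C_pow]
    exact (natDegree_C_mul_le _ _).trans hl.1
  · have e1 : ι ((RR A B D u).coeff u) = ι (C (resultant A (-B) u u)) := by
      rw [← coeff_map, key, ← C_pow, coeff_C_mul, hl.2]
      have e2 := resultant_eq_prod_eval P (-B.map (ι.comp C)) u (by simpa using hBu)
        (IsAlgClosed.splits P)
      have e3 : P = A.map (ι.comp C) + (-B.map (ι.comp C)) * C (ι X) := by
        simp only [P]; ring
      have e4 := resultant_add_mul_left (A.map (ι.comp C)) (-B.map (ι.comp C)) (C (ι X)) u u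
        (by simp) (by simpa using hBu)
      rw [← e3] at e4
      rw [hPn, e4] at e2
      simp only [eval_neg] at e2
      rw [← e2, ← RingHom.comp_apply, ← resultant_map_map, Polynomial.map_neg]
    have e2 := hι e1
    refine ⟨_, ?_, e2⟩
    intro h0
    apply h.RR_x0.1
    rw [e2, h0]; simp

end

section
open Polynomial

lemma val_coeff_le {K Γ : Type*} [Field K] [LinearOrderedCommGroupWithZero Γ]
    (v : Valuation K Γ) (P q : K[X]) (hP : P.Monic) (hPv : ∀ i, v (P.coeff i) ≤ 1)
    (hq : q.Monic) (H : q ∣ P) (i : ℕ) : v (q.coeff i) ≤ 1 := by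
  have hO := Valuation.integer.integers v
  have hl : P ∈ lifts (algebraMap v.integer K) := by
    rw [lifts_iff_coeff_lifts]
    intro n
    exact ⟨⟨P.coeff n, hPv n⟩, rfl⟩
  obtain ⟨P', hP', -, hm⟩ := lifts_and_natDegree_eq_and_monic hl hP
  have h1 := isIntegral_coeff_of_dvd P' q hm hq (by rw [hP']; exact H) i
  exact hO.mem_of_integral h1

lemma val_coeff_le' {K Γ : Type*} [Field K] [LinearOrderedCommGroupWithZero Γ]
    (v : Valuation K Γ) (P q : K[X]) (hP : v P.leadingCoeff = 1) (hPv : ∀ i, v (P.coeff i) ≤ 1)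
    (hq : q.Monic) (H : q ∣ P) (i : ℕ) : v (q.coeff i) ≤ 1 := by
  have hl : P.leadingCoeff ≠ 0 := by intro h; simp [h] at hP
  refine val_coeff_le v (C P.leadingCoeff⁻¹ * P) q ?_ ?_ hq (H.mul_left _) i
  · rw [Monic, leadingCoeff_mul, leadingCoeff_C, inv_mul_cancel₀ hl]
  · intro i
    rw [coeff_C_mul, map_mul, map_inv₀, hP]
    simpa using hPv i

lemma val_inv_le {K Γ : Type*} [Field K] [LinearOrderedCommGroupWithZero Γ]
    (v : Valuation K Γ) (P q : K[X]) (hP : v (P.coeff 0) = 1) (hPv : ∀ i, v (P.coeff i) ≤ 1)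
    (hq : q.Monic) (H : q ∣ P) : v ((q.coeff 0)⁻¹) ≤ 1 := by
  have hP0 : P.coeff 0 ≠ 0 := by intro h; simp [h] at hP
  obtain ⟨g, rfl⟩ := H
  have hq0 : q.coeff 0 ≠ 0 := by
    intro h; apply hP0; simp [mul_coeff_zero, h]
  have hq' : q.reverse.leadingCoeff = q.coeff 0 := by
    rw [reverse_leadingCoeff, trailingCoeff_eq_coeff_zero hq0]
  have h1 := val_coeff_le' v (q * g).reverse (C (q.coeff 0)⁻¹ * q.reverse) ?_ ?_ ?_ ?_
    0
  · rw [coeff_C_mul, coeff_zero_reverse, hq.leadingCoeff, mul_one] at h1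
    exact h1
  · rwa [reverse_leadingCoeff, trailingCoeff_eq_coeff_zero hP0]
  · intro i; rw [coeff_reverse]; exact hPv _
  · rw [Monic, leadingCoeff_mul, leadingCoeff_C, hq', inv_mul_cancel₀ hq0]
  · rw [reverse_mul_of_domain]
    refine Dvd.dvd.mul_right ?_ _
    refine ⟨C (q.coeff 0), ?_⟩
    rw [mul_right_comm, ← C_mul, inv_mul_cancel₀ hq0, C_1, one_mul]

end

section
open Polynomial IsDedekindDomain

/-- The polynomial `a(s) - w b(s)` over `ℂ(t)`. -/
noncomputable def pol (a b : ℂ[X]) (w : RatFunc ℂ) : (RatFunc ℂ)[X] :=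
  a.map (algebraMap ℂ (RatFunc ℂ)) - C w * b.map (algebraMap ℂ (RatFunc ℂ))

local notation "ιι" => algebraMap (Polynomial ℂ) (RatFunc ℂ)

lemma aeval_X_rf (a : ℂ[X]) : aeval (RatFunc.X : RatFunc ℂ) a = ιι a := by
  exact RatFunc.aeval_X_left_eq_algebraMap a

lemma val_const (v : HeightOneSpectrum ℂ[X]) (c : ℂ) :
    v.valuation (RatFunc ℂ) (algebraMap ℂ (RatFunc ℂ) c) ≤ 1 := by
  rw [IsScalarTower.algebraMap_apply ℂ ℂ[X] (RatFunc ℂ)]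
  exact v.valuation_le_one _

lemma val_const_eq (v : HeightOneSpectrum ℂ[X]) (c : ℂ) (hc : c ≠ 0) :
    v.valuation (RatFunc ℂ) (algebraMap ℂ (RatFunc ℂ) c) = 1 := by
  refine le_antisymm (val_const v c) ?_
  have h := val_const v c⁻¹
  rw [map_inv₀, map_inv₀] at h
  refine (inv_le_one₀ ?_).1 h
  rw [zero_lt_iff]
  simpa using hc

lemma val_pol (v : HeightOneSpectrum ℂ[X]) (a b : ℂ[X]) (w : RatFunc ℂ)
    (hw : v.valuation (RatFunc ℂ) w ≤ 1) (i : ℕ) :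
    v.valuation (RatFunc ℂ) ((pol a b w).coeff i) ≤ 1 := by
  rw [pol, coeff_sub, coeff_C_mul, coeff_map, coeff_map]
  refine (Valuation.map_sub _ _ _).trans (max_le (val_const v _) ?_)
  rw [map_mul]
  exact mul_le_one' hw (val_const v _)

lemma val_coprime (v : HeightOneSpectrum ℂ[X]) (f g : ℂ[X]) (h : IsCoprime f g) :
    v.valuation (RatFunc ℂ) (ιι f) = 1 ∨ v.valuation (RatFunc ℂ) (ιι g) = 1 := by
  by_contra! hh
  have h1 := (v.valuation_lt_one_iff_mem (K := RatFunc ℂ) f).1 (lt_of_le_of_ne (v.valuation_le_one f) hh.1)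
  have h2 := (v.valuation_lt_one_iff_mem (K := RatFunc ℂ) g).1 (lt_of_le_of_ne (v.valuation_le_one g) hh.2)
  obtain ⟨x, y, hxy⟩ := h
  apply v.isPrime.ne_top
  rw [Ideal.eq_top_iff_one, ← hxy]
  exact add_mem (Ideal.mul_mem_left _ _ h1) (Ideal.mul_mem_left _ _ h2)

lemma val_AD (v : HeightOneSpectrum ℂ[X]) (f g : ℂ[X]) (hf : f ≠ 0)
    (h : ∀ τ : ℂ, τ ≠ 0 → f.eval τ = 0 → g.eval τ ≠ 0)
    (hX : v.valuation (RatFunc ℂ) (ιι X) = 1) :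
    v.valuation (RatFunc ℂ) (ιι f) = 1 ∨ v.valuation (RatFunc ℂ) (ιι g) = 1 := by
  by_contra! hh
  have h1 := (v.valuation_lt_one_iff_mem (K := RatFunc ℂ) f).1 (lt_of_le_of_ne (v.valuation_le_one f) hh.1)
  have h2 := (v.valuation_lt_one_iff_mem (K := RatFunc ℂ) g).1 (lt_of_le_of_ne (v.valuation_le_one g) hh.2)
  have h3 : X ∉ v.asIdeal := fun hx => by
    have := (v.valuation_lt_one_iff_mem (K := RatFunc ℂ) X).2 hx
    exact this.ne hX
  have hC : ∀ c : ℂ, c ≠ 0 → C c ∉ v.asIdeal := by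
    intro c hc hm
    apply v.isPrime.ne_top
    exact Ideal.eq_top_of_isUnit_mem _ hm (by simpa using hc)
  rw [(IsAlgClosed.splits f).eq_prod_roots] at h1
  rcases v.isPrime.mem_or_mem h1 with h1 | h1
  · exact hC _ (leadingCoeff_ne_zero.2 hf) h1
  · rw [Ideal.IsPrime.multiset_prod_mem_iff_exists_mem v.isPrime] at h1
    obtain ⟨q, hq, hm⟩ := h1
    obtain ⟨τ, hτ, rfl⟩ := Multiset.mem_map.1 hq
    have hτ0 : τ ≠ 0 := by
      rintro rfl; apply h3; simpa using hm
    have hg := h τ hτ0 (isRoot_of_mem_roots hτ)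
    apply hC _ hg
    have : C (g.eval τ) = g - (X - C τ) * (g /ₘ (X - C τ)) := by
      rw [eq_sub_iff_add_eq, ← modByMonic_X_sub_C_eq_C_eval]
      exact modByMonic_add_div _ _
    rw [this]
    exact sub_mem h2 (Ideal.mul_mem_right _ _ hm)

lemma minpoly_dvd_pol (L : IntermediateField ℂ (RatFunc ℂ)) (a b : ℂ[X]) (hb : b ≠ 0)
    (hw : ιι a / ιι b ∈ L) :
    (minpoly L (RatFunc.X : RatFunc ℂ)).map (algebraMap L (RatFunc ℂ)) ∣
      pol a b (ιι a / ιι b) := by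
  have hb' : ιι b ≠ 0 := by simpa using hb
  have h1 : minpoly L (RatFunc.X : RatFunc ℂ) ∣ a.map (algebraMap ℂ L) -
      C (⟨_, hw⟩ : L) * b.map (algebraMap ℂ L) := by
    apply minpoly.dvd
    rw [map_sub, map_mul, aeval_map_algebraMap, aeval_map_algebraMap, aeval_X_rf, aeval_X_rf,
      aeval_C]
    simp [div_mul_cancel₀ _ hb']
  have h2 := Polynomial.map_dvd (algebraMap L (RatFunc ℂ)) h1
  convert h2 using 1
  simp only [pol, Polynomial.map_sub, Polynomial.map_mul, Polynomial.map_map, map_C,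
    ← IsScalarTower.algebraMap_eq]
  rfl

lemma coprime_of_roots (f g : ℂ[X]) (h : ∀ τ, f.eval τ = 0 → g.eval τ ≠ 0) : IsCoprime f g := by
  rw [Polynomial.isCoprime_iff_aeval_ne_zero_of_isAlgClosed ℂ ℂ]
  intro τ
  by_cases hf : f.eval τ = 0
  · right; simpa using h τ hf
  · left; simpa using hf

section
variable {A B D : ℂ[X]} {u : ℕ}

lemma Good.val_min (h : Good A B D u) (L : IntermediateField ℂ (RatFunc ℂ))
    (hx : ιι A / ιι B ∈ L) (hz : ιι D / ιι B ∈ L)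
    (hIntg : IsIntegral L (RatFunc.X : RatFunc ℂ)) (v : HeightOneSpectrum ℂ[X]) (i : ℕ) :
    v.valuation (RatFunc ℂ) (((minpoly L (RatFunc.X : RatFunc ℂ)).map
      (algebraMap L (RatFunc ℂ))).coeff i) ≤ 1 := by
  have hB' : ιι B ≠ 0 := by simpa using h.hBne
  have hm : ((minpoly L (RatFunc.X : RatFunc ℂ)).map (algebraMap L (RatFunc ℂ))).Monic :=
    (minpoly.monic hIntg).map _
  have gen : ∀ b : ℂ[X], b.natDegree < u → b ≠ 0 → ιι A / ιι b ∈ L →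
      v.valuation (RatFunc ℂ) (ιι b) = 1 → v.valuation (RatFunc ℂ) (((minpoly L
        (RatFunc.X : RatFunc ℂ)).map (algebraMap L (RatFunc ℂ))).coeff i) ≤ 1 := by
    intro b hbu hb hL hvb
    refine val_coeff_le' _ _ _ ?_ (val_pol v A b _ ?_) hm (minpoly_dvd_pol L A b hb hL) i
    · have hd : (C (ιι A / ιι b) * b.map (algebraMap ℂ (RatFunc ℂ))).degree <
          (A.map (algebraMap ℂ (RatFunc ℂ))).degree := by
        apply degree_lt_degree
        rw [natDegree_map, h.hA]
        exact (natDegree_C_mul_le _ _).trans_lt (natDegree_map_le.trans_lt hbu)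
      rw [pol, leadingCoeff_sub_of_degree_lt hd, leadingCoeff_map]
      exact val_const_eq v _ (leadingCoeff_ne_zero.2 h.hAne)
    · rw [map_div₀, hvb, div_one]; exact v.valuation_le_one _
  rcases val_coprime v D B (coprime_of_roots D B h.hDB) with hv | hv
  · refine gen D h.hD h.hDne ?_ hv
    have : ιι A / ιι D = (ιι A / ιι B) / (ιι D / ιι B) := by field_simp
    rw [this]; exact div_mem hx hz
  · exact gen B h.hB h.hBne hx hv

lemma Good.val_min_inv (h : Good A B D u) (L : IntermediateField ℂ (RatFunc ℂ))
    (hx : ιι A / ιι B ∈ L) (hz : ιι D / ιι B ∈ L)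
    (hIntg : IsIntegral L (RatFunc.X : RatFunc ℂ)) (v : HeightOneSpectrum ℂ[X])
    (hv : v.valuation (RatFunc ℂ) (ιι X) = 1) :
    v.valuation (RatFunc ℂ) (((minpoly L (RatFunc.X : RatFunc ℂ)).map
      (algebraMap L (RatFunc ℂ))).coeff 0)⁻¹ ≤ 1 := by
  have hB' : ιι B ≠ 0 := by simpa using h.hBne
  have hm : ((minpoly L (RatFunc.X : RatFunc ℂ)).map (algebraMap L (RatFunc ℂ))).Monic :=
    (minpoly.monic hIntg).map _
  have gen : ∀ b : ℂ[X], b.eval 0 = 0 → b ≠ 0 → ιι B / ιι b ∈ L →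
      v.valuation (RatFunc ℂ) (ιι b) = 1 → v.valuation (RatFunc ℂ) (((minpoly L
        (RatFunc.X : RatFunc ℂ)).map (algebraMap L (RatFunc ℂ))).coeff 0)⁻¹ ≤ 1 := by
    intro b hbu hb hL hvb
    refine val_inv_le _ _ _ ?_ (val_pol v B b _ ?_) hm (minpoly_dvd_pol L B b hb hL)
    · rw [pol, coeff_sub, coeff_C_mul, coeff_map, coeff_map, coeff_zero_eq_eval_zero b, hbu,
        map_zero, mul_zero, sub_zero, coeff_zero_eq_eval_zero]
      exact val_const_eq v _ h.hB0
    · rw [map_div₀, hvb, div_one]; exact v.valuation_le_one _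
  rcases val_AD v A D h.hAne h.hAD hv with hv | hv
  · refine gen A h.hA0 h.hAne ?_ hv
    have := inv_mem hx
    rwa [inv_div] at this
  · refine gen D h.hD0 h.hDne ?_ hv
    have := inv_mem hz
    rwa [inv_div] at this

lemma Good.hIntg (h : Good A B D u) (L : IntermediateField ℂ (RatFunc ℂ))
    (hx : ιι A / ιι B ∈ L) : IsIntegral L (RatFunc.X : RatFunc ℂ) := by
  apply IsAlgebraic.isIntegral
  have hB' : ιι B ≠ 0 := by simpa using h.hBne
  refine ⟨A.map (algebraMap ℂ L) - C (⟨_, hx⟩ : L) * B.map (algebraMap ℂ L), ?_, ?_⟩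
  · intro h0
    have := congrArg (fun p => p.coeff u) h0
    simp only [coeff_sub, coeff_C_mul, coeff_map, coeff_eq_zero_of_natDegree_lt h.hB,
      map_zero, mul_zero, sub_zero, coeff_zero] at this
    rw [← h.hA] at this
    simp at this
    exact h.hAne this
  · rw [map_sub, map_mul, aeval_map_algebraMap, aeval_map_algebraMap, aeval_X_rf, aeval_X_rf,
      aeval_C]
    simp [div_mul_cancel₀ _ hB']

end

end

section
open Polynomial IsDedekindDomain

local notation "ιι" => algebraMap (Polynomial ℂ) (RatFunc ℂ)

lemma only_root_zero (w : ℂ[X]) (hw : ∀ τ, τ ≠ 0 → w.eval τ ≠ 0) :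
    ∃ n, w = C w.leadingCoeff * X ^ n := by
  refine ⟨w.roots.card, ?_⟩
  have h1 : w.roots = Multiset.replicate w.roots.card 0 := by
    rw [Multiset.eq_replicate_card]
    intro τ hτ
    by_contra h0
    exact hw τ h0 (isRoot_of_mem_roots hτ)
  have h2 := (IsAlgClosed.splits w).eq_prod_roots
  conv_lhs => rw [h2, h1]
  simp

lemma zeta_lemma (A B : ℂ[X]) (ζ : ℂ) (hAB : IsCoprime A B) (hB0 : B.eval 0 ≠ 0) (hA : A ≠ 0)
    (h : A.comp (C ζ * X) * B = A * B.comp (C ζ * X)) :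
    A.comp (C ζ * X) = A ∧ B.comp (C ζ * X) = B := by
  obtain ⟨k, hk⟩ : A ∣ A.comp (C ζ * X) := by
    apply hAB.dvd_of_dvd_mul_right; rw [h]; exact dvd_mul_right _ _
  rw [hk, mul_assoc] at h
  have h2 := mul_left_cancel₀ hA h
  have hk0 : k.eval 0 = 1 := by
    have := congrArg (eval 0) h2
    rw [eval_mul, eval_comp, eval_mul, eval_X, mul_zero] at this
    exact mul_right_cancel₀ hB0 (by rw [this, one_mul])
  have hkne : k ≠ 0 := by rintro rfl; simp at hk0
  have hdeg : (A.comp (C ζ * X)).natDegree ≤ A.natDegree := by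
    refine natDegree_comp_le.trans ?_
    exact (Nat.mul_le_mul_left _ ((natDegree_C_mul_le _ _).trans natDegree_X_le)).trans (by simp)
  rw [hk, natDegree_mul hA hkne] at hdeg
  have hk1 : k = 1 := by
    rw [eq_C_of_natDegree_eq_zero (by omega : k.natDegree = 0), coeff_zero_eq_eval_zero, hk0, C_1]
  rw [hk1, one_mul] at h2
  rw [hk, hk1, mul_one]
  exact ⟨rfl, h2.symm⟩

lemma coeff_comp_scale (A : ℂ[X]) (ζ : ℂ) (h : A.comp (C ζ * X) = A) (s : ℕ)
    (hs : A.coeff s ≠ 0) : ζ ^ s = 1 := by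
  have := congrArg (fun p => p.coeff s) h
  simp only [comp_C_mul_X_coeff] at this
  exact mul_left_cancel₀ hs (by rw [this, mul_one])

lemma Good.w_exists {A B D : ℂ[X]} {u : ℕ} (h : Good A B D u)
    (L : IntermediateField ℂ (RatFunc ℂ))
    (hx : ιι A / ιι B ∈ L) (hz : ιι D / ιι B ∈ L) :
    ∃ n, n ≠ 0 ∧ (RatFunc.X : RatFunc ℂ) ^ n ∈ L := by
  have hIntg := h.hIntg L hx
  have hcoef := h.val_min L hx hz hIntg
  have hinv := h.val_min_inv L hx hz hIntg
  have hroot : ((minpoly L (RatFunc.X : RatFunc ℂ)).map (algebraMap L (RatFunc ℂ))).eval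
      RatFunc.X = 0 := by
    rw [eval_map_algebraMap]; exact minpoly.aeval _ _
  have hpL : ((minpoly L (RatFunc.X : RatFunc ℂ)).map (algebraMap L (RatFunc ℂ))).coeff 0 ∈ L := by
    rw [coeff_map]; exact SetLike.coe_mem _
  have hp0 : ((minpoly L (RatFunc.X : RatFunc ℂ)).map (algebraMap L (RatFunc ℂ))).coeff 0 ≠ 0 := by
    rw [coeff_map]
    intro h0
    have := (map_eq_zero _).1 h0
    rw [minpoly.coeff_zero_eq_zero hIntg] at this
    exact RatFunc.X_ne_zero this
  generalize (minpoly L (RatFunc.X : RatFunc ℂ)).map (algebraMap L (RatFunc ℂ)) = p at *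
  have hl : p ∈ lifts ιι := by
    rw [lifts_iff_coeff_lifts]
    intro n
    exact HeightOneSpectrum.mem_integers_of_valuation_le_one (RatFunc ℂ) _ (fun v => hcoef v n)
  obtain ⟨q, rfl⟩ := hl
  rw [coe_mapRingHom] at *
  rw [coeff_map] at *
  have hinj : Function.Injective ιι := IsFractionRing.injective _ _
  have hw0 : q.coeff 0 ≠ 0 := by intro h0; simp [h0] at hp0
  have hw : ∀ τ, τ ≠ 0 → (q.coeff 0).eval τ ≠ 0 := by
    intro τ hτ he
    let v : HeightOneSpectrum ℂ[X] := ⟨Ideal.span {X - C τ},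
      (Ideal.span_singleton_prime (X_sub_C_ne_zero τ)).2 (prime_X_sub_C τ), by
        simpa using X_sub_C_ne_zero τ⟩
    have h1 : v.valuation (RatFunc ℂ) (ιι X) = 1 := by
      refine le_antisymm (v.valuation_le_one _) (not_lt.1 fun hlt => ?_)
      have := (v.valuation_lt_one_iff_mem (K := RatFunc ℂ) X).1 hlt
      rw [Ideal.mem_span_singleton, dvd_iff_isRoot] at this
      simp at this; exact hτ this
    have h2 := hinv v h1
    have h3 := (v.valuation_lt_one_iff_mem (K := RatFunc ℂ) (q.coeff 0)).2 (by
      rw [Ideal.mem_span_singleton, dvd_iff_isRoot]; exact he)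
    rw [map_inv₀] at h2
    have h4 : 0 < v.valuation (RatFunc ℂ) (ιι (q.coeff 0)) := by
      rw [zero_lt_iff]; simpa using hp0
    exact absurd ((inv_le_one₀ h4).1 h2) (not_le.2 h3)
  obtain ⟨n, hn⟩ := only_root_zero _ hw
  have hlc : (q.coeff 0).leadingCoeff ≠ 0 := leadingCoeff_ne_zero.2 hw0
  have he0 : (q.coeff 0).eval 0 = 0 := by
    have h1 : q.eval X = 0 := by
      apply hinj
      rw [map_zero, ← hroot, ← RatFunc.algebraMap_X, eval_map, eval₂_hom]
    have h2 := congrArg (eval X) (divX_mul_X_add q)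
    rw [h1, eval_add, eval_mul, eval_X, eval_C] at h2
    have h3 := congrArg (eval 0) h2
    simpa using h3
  refine ⟨n, ?_, ?_⟩
  · rintro rfl
    rw [hn] at he0
    simp at he0
    exact hw0 he0
  · rw [hn, map_mul, map_pow, RatFunc.algebraMap_X, RatFunc.algebraMap_C] at hpL
    have h5 : (RatFunc.C (q.coeff 0).leadingCoeff : RatFunc ℂ)⁻¹ ∈ L :=
      inv_mem (L.algebraMap_mem (q.coeff 0).leadingCoeff)
    have := mul_mem h5 hpL
    rwa [inv_mul_cancel_left₀] at this
    simpa using hw0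

lemma Good.X_mem {A B D : ℂ[X]} {u : ℕ} (h : Good A B D u)
    (L : IntermediateField ℂ (RatFunc ℂ))
    (hx : ιι A / ιι B ∈ L) (hz : ιι D / ιι B ∈ L) :
    (RatFunc.X : RatFunc ℂ) ∈ L := by
  have hIntg := h.hIntg L hx
  obtain ⟨n, hn, ht⟩ := h.w_exists L hx hz
  have hdA := minpoly_dvd_pol L A B h.hBne hx
  have hdD := minpoly_dvd_pol L D B h.hBne hz
  have hdn : (minpoly L (RatFunc.X : RatFunc ℂ)).map (algebraMap L (RatFunc ℂ)) ∣
      X ^ n - C ((RatFunc.X : RatFunc ℂ) ^ n) := by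
    have h1 : minpoly L (RatFunc.X : RatFunc ℂ) ∣ X ^ n - C (⟨_, ht⟩ : L) := by
      apply minpoly.dvd; simp
    have h2 := Polynomial.map_dvd (algebraMap L (RatFunc ℂ)) h1
    simpa using h2
  have hsep : ((minpoly L (RatFunc.X : RatFunc ℂ)).map (algebraMap L (RatFunc ℂ))).Separable :=
    (minpoly.irreducible hIntg).separable.map
  have hspl : (X ^ n - C ((RatFunc.X : RatFunc ℂ) ^ n)).Splits := by
    have hr := (Complex.isPrimitiveRoot_exp n hn).map_of_injective
      (algebraMap ℂ (RatFunc ℂ)).injective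
    exact X_pow_sub_C_splits_of_isPrimitiveRoot hr rfl
  suffices hdeg : (minpoly L (RatFunc.X : RatFunc ℂ)).natDegree = 1 by
    rw [minpoly.natDegree_eq_one_iff] at hdeg
    obtain ⟨y, hy⟩ := hdeg
    rw [← hy]; exact y.2
  have hpos := minpoly.natDegree_pos hIntg
  by_contra hne
  have hpne : (X ^ n - C ((RatFunc.X : RatFunc ℂ) ^ n)) ≠ 0 := X_pow_sub_C_ne_zero (by omega) _
  have hs := hspl.of_dvd hpne hdn
  have hcard := splits_iff_card_roots.1 hs
  rw [natDegree_map] at hcard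
  have hnd := nodup_roots hsep
  obtain ⟨ρ, hρ, hρt⟩ : ∃ ρ ∈ ((minpoly L (RatFunc.X : RatFunc ℂ)).map
      (algebraMap L (RatFunc ℂ))).roots, ρ ≠ RatFunc.X := by
    by_contra! hall
    rw [← Multiset.eq_replicate_card] at hall
    rw [hall] at hnd
    have h2 : 2 ≤ ((minpoly L (RatFunc.X : RatFunc ℂ)).map
      (algebraMap L (RatFunc ℂ))).roots.card := by omega
    have h3 := Multiset.nodup_iff_le.1 hnd RatFunc.X
    exact h3 (Multiset.replicate_le_replicate _ |>.2 h2)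
  have hev := isRoot_of_mem_roots hρ
  have hρn : ρ ^ n = RatFunc.X ^ n := by
    have := hev.dvd hdn
    simpa [sub_eq_zero] using this
  have hX0 : (RatFunc.X : RatFunc ℂ) ≠ 0 := RatFunc.X_ne_zero
  obtain ⟨ζ, hζ⟩ : ∃ ζ : ℂ, algebraMap ℂ (RatFunc ℂ) ζ = ρ / RatFunc.X := by
    have h1 : ((X ^ n - C 1 : ℂ[X]).map (algebraMap ℂ (RatFunc ℂ))).IsRoot (ρ / RatFunc.X) := by
      simp [div_pow, hρn, hX0]
    exact Splits.mem_range_of_isRoot (IsAlgClosed.splits _) (X_pow_sub_C_ne_zero (by omega) _) h1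
  have hρ' : ρ = ιι (C ζ * X) := by
    rw [map_mul, RatFunc.algebraMap_X, RatFunc.algebraMap_C]
    rw [RatFunc.algebraMap_eq_C] at hζ
    rw [hζ, div_mul_cancel₀ _ hX0]
  have hcomp : ∀ a : ℂ[X], (a.map (algebraMap ℂ (RatFunc ℂ))).eval ρ = ιι (a.comp (C ζ * X)) := by
    intro a
    rw [hρ', eval_map_algebraMap, aeval_algebraMap_apply, aeval_def, comp]
    rfl
  have hB' : ιι B ≠ 0 := by simpa using h.hBne
  have hinj : Function.Injective ιι := IsFractionRing.injective _ _
  have hrel : ∀ a : ℂ[X], (pol a B (ιι a / ιι B)).IsRoot ρ →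
      a.comp (C ζ * X) * B = a * B.comp (C ζ * X) := by
    intro a ha
    rw [IsRoot, pol, eval_sub, eval_mul, eval_C, hcomp, hcomp, sub_eq_zero] at ha
    apply hinj
    rw [map_mul, map_mul, ha]
    field_simp
  obtain ⟨hA', hB''⟩ := zeta_lemma A B ζ (coprime_of_roots _ _ h.hAB) h.hB0 h.hAne
    (hrel A (hev.dvd hdA))
  have hD' := hrel D (hev.dvd hdD)
  rw [hB''] at hD'
  have hD'' := mul_right_cancel₀ h.hBne hD'
  have := h.hz ζ (coeff_comp_scale A ζ hA') (coeff_comp_scale B ζ hB'') (coeff_comp_scale D ζ hD'')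
  apply hρt
  rw [hρ', this]; simp

end

section
open Polynomial IntermediateField

local notation "ιι" => algebraMap (Polynomial ℂ) (RatFunc ℂ)

/-- Evaluation of `ℂ[x][z]` at a point. -/
noncomputable def ev2 {K : Type*} [CommRing K] [Algebra ℂ K] (x z : K) : ℂ[X][X] →+* K :=
  eval₂RingHom (eval₂RingHom (algebraMap ℂ K) x) z

lemma ev2_CX {K : Type*} [CommRing K] [Algebra ℂ K] (x z : K) : ev2 x z (C X) = x := by
  simp [ev2]

lemma ev2_X {K : Type*} [CommRing K] [Algebra ℂ K] (x z : K) : ev2 x z X = z := by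
  simp [ev2]

lemma ev2_comp {K : Type*} [CommRing K] [Algebra ℂ K] (x z : K) :
    (ev2 x z).comp (C.comp C) = algebraMap ℂ K := by
  ext c; simp [ev2]

lemma RR_vanish {K : Type*} [CommRing K] [Algebra ℂ K] (x z t : K) (A B D : ℂ[X]) (u : ℕ)
    (hA : A.natDegree ≤ u) (hB : B.natDegree ≤ u) (hD : D.natDegree ≤ u) (hu : u ≠ 0)
    (hx : aeval t A = x * aeval t B) (hz : aeval t D = z * aeval t B) :
    ev2 x z (RR A B D u) = 0 := by
  have hf : (fX A B).natDegree ≤ u :=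
    (natDegree_sub_le _ _).trans (max_le (natDegree_map_le.trans hA)
      ((natDegree_C_mul_le _ _).trans (natDegree_map_le.trans hB)))
  have hg : (gZ D B).natDegree ≤ u :=
    (natDegree_sub_le _ _).trans (max_le (natDegree_map_le.trans hD)
      ((natDegree_C_mul_le _ _).trans (natDegree_map_le.trans hB)))
  obtain ⟨p, q, -, -, h⟩ := exists_mul_add_mul_eq_C_resultant (fX A B) (gZ D B) hf hg (Or.inl hu)
  have h1 : eval₂ (ev2 x z) t (fX A B) = 0 := by
    rw [fX, eval₂_sub, eval₂_mul, eval₂_C, eval₂_map, eval₂_map, ev2_comp, ev2_CX,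
      ← aeval_def, ← aeval_def, hx, sub_self]
  have h2 : eval₂ (ev2 x z) t (gZ D B) = 0 := by
    rw [gZ, eval₂_sub, eval₂_mul, eval₂_C, eval₂_map, eval₂_map, ev2_comp, ev2_X,
      ← aeval_def, ← aeval_def, hz, sub_self]
  have h3 := congrArg (eval₂ (ev2 x z) t) h
  rw [eval₂_add, eval₂_mul, eval₂_mul, h1, h2, zero_mul, zero_mul, zero_add, eval₂_C] at h3
  exact h3.symm

lemma Good.RR_vanish' {A B D : ℂ[X]} {u : ℕ} (h : Good A B D u) :
    ev2 (ιι A / ιι B) (ιι D / ιι B) (RR A B D u) = 0 := by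
  have hB' : ιι B ≠ 0 := by simpa using h.hBne
  refine RR_vanish _ _ (RatFunc.X : RatFunc ℂ) A B D u h.hA.le h.hB.le h.hD.le h.upos.ne' ?_ ?_
  · rw [aeval_X_rf, aeval_X_rf, div_mul_cancel₀ _ hB']
  · rw [aeval_X_rf, aeval_X_rf, div_mul_cancel₀ _ hB']

lemma Good.x_ne_C {A B D : ℂ[X]} {u : ℕ} (h : Good A B D u) :
    ¬ ∃ c, ιι A / ιι B = RatFunc.C c := by
  rintro ⟨c, hc⟩
  have hB' : ιι B ≠ 0 := by simpa using h.hBne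
  rw [div_eq_iff hB', ← RatFunc.algebraMap_C, ← map_mul] at hc
  have hc := IsFractionRing.injective _ _ hc
  have h1 := h.hA
  have h2 := h.hB
  have h3 := natDegree_C_mul_le c B
  rw [← hc] at h3
  omega

lemma Good.finrank_x {A B D : ℂ[X]} {u : ℕ} (h : Good A B D u) :
    Module.finrank ℂ⟮ιι A / ιι B⟯ (RatFunc ℂ) = u := by
  have hB' : ιι B ≠ 0 := by simpa using h.hBne
  rw [RatFunc.finrank_eq_max_natDegree]
  set x := ιι A / ιι B with hx
  have hd := x.denom_ne_zero
  have hd' : ιι x.denom ≠ 0 := by simpa using hd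
  have h1 : x.num * B = A * x.denom := by
    apply IsFractionRing.injective ℂ[X] (RatFunc ℂ)
    have := x.num_div_denom
    rw [hx] at this
    rw [div_eq_div_iff hd' hB', ← map_mul, ← map_mul] at this
    exact this
  have hc := coprime_of_roots _ _ h.hAB
  have hAn : A ∣ x.num := hc.dvd_of_dvd_mul_right (by rw [h1]; exact dvd_mul_right _ _)
  have hnA : x.num ∣ A := x.isCoprime_num_denom.dvd_of_dvd_mul_right
    (by rw [← h1]; exact dvd_mul_right _ _)
  have hBd : x.denom ∣ B := x.isCoprime_num_denom.symm.dvd_of_dvd_mul_left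
    (by rw [h1]; exact dvd_mul_left _ _)
  have e1 := natDegree_le_of_dvd hnA h.hAne
  have hn0 : x.num ≠ 0 := by
    intro h0; rw [h0, zero_mul] at h1
    exact mul_ne_zero h.hAne hd h1.symm
  have e2 := natDegree_le_of_dvd hAn hn0
  have e3 := natDegree_le_of_dvd hBd h.hBne
  have := h.hA
  have := h.hB
  rw [max_eq_left] <;> omega

lemma Good.RR_dvd {A B D : ℂ[X]} {u : ℕ} (h : Good A B D u) (f : ℂ[X][X])
    (hf : ev2 (ιι A / ιι B) (ιι D / ιι B) f = 0) : RR A B D u ∣ f := by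
  obtain ⟨hdeg, κ, hκ, htop⟩ := h.RR_top
  set M := C (C κ⁻¹) * RR A B D u with hM
  have hMm : M.Monic := by
    apply monic_of_natDegree_le_of_coeff_eq_one u ((natDegree_C_mul_le _ _).trans hdeg)
    rw [coeff_C_mul, htop, ← C_mul, inv_mul_cancel₀ hκ, C_1]
  have hMc : M.coeff u = 1 := by rw [hM, coeff_C_mul, htop, ← C_mul, inv_mul_cancel₀ hκ, C_1]
  have hMu : M.natDegree = u := le_antisymm ((natDegree_C_mul_le _ _).trans hdeg)
    (le_natDegree_of_ne_zero (by rw [hMc]; exact one_ne_zero))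
  have hMf : M ∣ f := by
    rw [← modByMonic_eq_zero_iff_dvd hMm]
    by_contra hr
    have hrd : (f %ₘ M).natDegree < u := by
      rw [← hMu]
      exact natDegree_modByMonic_lt _ hMm (by
        intro h1; rw [h1, natDegree_one] at hMu; exact h.upos.ne hMu)
    have hev : ev2 (ιι A / ιι B) (ιι D / ιι B) (f %ₘ M) = 0 := by
      have h1 := congrArg (ev2 (ιι A / ιι B) (ιι D / ιι B)) (modByMonic_add_div f M)
      rw [map_add, map_mul, hM, map_mul, h.RR_vanish', hf] at h1
      simpa using h1
    generalize f %ₘ M = r at *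
    set x := ιι A / ιι B with hx
    set z := ιι D / ιι B with hz
    have htr := RatFunc.transcendental_of_ne_C x h.x_ne_C
    let g : ℂ[X] →+* ℂ⟮x⟯ := (aeval (AdjoinSimple.gen ℂ x)).toRingHom
    have hgc : (algebraMap ℂ⟮x⟯ (RatFunc ℂ)).comp g = eval₂RingHom (algebraMap ℂ (RatFunc ℂ)) x := by
      ext <;> simp [g]
    have hginj : Function.Injective g := by
      have h1 : Function.Injective ((algebraMap ℂ⟮x⟯ (RatFunc ℂ)).comp g) := by
        rw [hgc]
        exact transcendental_iff_injective.1 htr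
      rw [RingHom.coe_comp] at h1
      exact Function.Injective.of_comp h1
    have hz0 : aeval z (r.map g) = 0 := by
      rw [aeval_def, eval₂_map, hgc]; exact hev
    have hrg : r.map g ≠ 0 := (Polynomial.map_ne_zero_iff hginj).2 hr
    have hzint : IsIntegral ℂ⟮x⟯ z := IsAlgebraic.isIntegral ⟨_, hrg, hz0⟩
    have htop' : ℂ⟮x⟯⟮z⟯ = ⊤ := by
      rw [← restrictScalars_eq_top_iff (K := ℂ), eq_top_iff, ← RatFunc.adjoin_X,
        adjoin_simple_le_iff]
      refine h.X_mem _ ?_ ?_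
      · exact IntermediateField.algebraMap_mem ℂ⟮x⟯⟮z⟯ (AdjoinSimple.gen ℂ x)
      · exact mem_adjoin_simple_self ℂ⟮x⟯ z
    have hfr := adjoin.finrank hzint
    rw [htop', finrank_top', h.finrank_x] at hfr
    have h5 := natDegree_le_of_dvd (minpoly.dvd _ _ hz0) hrg
    rw [natDegree_map_eq_of_injective hginj] at h5
    omega
  exact (Dvd.intro_left _ rfl).trans hMf

end

section
open Polynomial

lemma reflect_coeff_of_le (u : ℕ) (f : ℂ[X]) (s : ℕ) (hs : s ≤ u) :
    (reflect u f).coeff s = f.coeff (u - s) := by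
  rw [coeff_reflect, revAt_le hs]

lemma reflect_coeff_of_gt (u : ℕ) (f : ℂ[X]) (hf : f.natDegree ≤ u) (s : ℕ) (hs : u < s) :
    (reflect u f).coeff s = 0 := by
  rw [coeff_reflect, revAt_eq_self_of_lt hs]
  exact coeff_eq_zero_of_natDegree_lt (by omega)

lemma reflect_natDegree_le (u : ℕ) (f : ℂ[X]) (hf : f.natDegree ≤ u) :
    (reflect u f).natDegree ≤ u := by
  rw [natDegree_le_iff_coeff_eq_zero]
  exact fun s hs => reflect_coeff_of_gt u f hf s hs

lemma reflect_eval (u : ℕ) (f : ℂ[X]) (hf : f.natDegree ≤ u) (τ : ℂ) (hτ : τ ≠ 0) :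
    (reflect u f).eval τ = 0 ↔ f.eval τ⁻¹ = 0 := by
  let _ : Invertible τ⁻¹ := invertibleOfNonzero (inv_ne_zero hτ)
  have := eval₂_reflect_mul_pow (RingHom.id ℂ) τ⁻¹ u f hf
  rw [invOf_eq_inv, inv_inv] at this
  rw [eval, eval, ← this]
  simp [hτ]

lemma rootMult_of_coeff (p : ℂ[X]) (a : ℕ) (h1 : ∀ l < a, p.coeff l = 0) (h2 : p.coeff a ≠ 0) :
    p.rootMultiplicity 0 = a := by
  rw [rootMultiplicity_eq_natTrailingDegree']
  apply le_antisymm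
  · exact natTrailingDegree_le_of_ne_zero h2
  · by_contra hlt
    have hp : p ≠ 0 := by rintro rfl; simp at h2
    exact trailingCoeff_nonzero_iff_nonzero.2 hp (h1 _ (not_le.1 hlt))

lemma natDegree_lt_of_coeff (p : ℂ[X]) (u : ℕ) (hu : 0 < u) (h : p.natDegree ≤ u)
    (h2 : p.coeff u = 0) : p.natDegree < u := by
  rcases h.lt_or_eq with h | h
  · exact h
  · rw [← h, coeff_natDegree, leadingCoeff_eq_zero] at h2
    rw [h2]; simpa using hu

lemma Good.refl {A B D : ℂ[X]} {u : ℕ} (h : Good A B D u) :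
    Good (reflect u B) (reflect u A) (reflect u D) u := by
  have hu := h.upos
  have hA := h.hA.le
  have hB := h.hB.le
  have hD := h.hD.le
  have hA0 := h.hA0
  have hB0 := h.hB0
  have hD0 := h.hD0
  rw [← coeff_zero_eq_eval_zero] at hA0 hB0 hD0
  have hAu : A.coeff u ≠ 0 := by
    have := leadingCoeff_ne_zero.2 h.hAne
    rwa [leadingCoeff, h.hA] at this
  have hA'0 : (reflect u A).eval 0 ≠ 0 := by
    rw [← coeff_zero_eq_eval_zero, reflect_coeff_of_le _ _ _ (Nat.zero_le u)]
    exact hAu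
  have z0 : ∀ f : ℂ[X], f.natDegree ≤ u → (reflect u f).coeff u = f.coeff 0 := fun f hf => by
    rw [reflect_coeff_of_le _ _ _ le_rfl, Nat.sub_self]
  refine ⟨?_, ?_, ?_, ?_, ?_, hA'0, ?_, ?_, ?_, ?_, ?_⟩
  · apply le_antisymm (reflect_natDegree_le u B hB)
    exact le_natDegree_of_ne_zero (by rw [z0 B hB]; exact hB0)
  · exact natDegree_lt_of_coeff _ u hu (reflect_natDegree_le u A hA) (by rw [z0 A hA]; exact hA0)
  · exact natDegree_lt_of_coeff _ u hu (reflect_natDegree_le u D hD) (by rw [z0 D hD]; exact hD0)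
  · rw [← coeff_zero_eq_eval_zero, reflect_coeff_of_le _ _ _ (Nat.zero_le u)]
    exact coeff_eq_zero_of_natDegree_lt h.hB
  · rw [← coeff_zero_eq_eval_zero, reflect_coeff_of_le _ _ _ (Nat.zero_le u)]
    exact coeff_eq_zero_of_natDegree_lt h.hD
  · intro h0
    exact h.hDne ((reflect_eq_zero_iff).1 h0)
  · intro τ h1
    by_cases hτ : τ = 0
    · rw [hτ]; exact hA'0
    · rw [reflect_eval _ _ hB _ hτ] at h1
      rw [Ne, reflect_eval _ _ hA _ hτ]
      intro h2; exact h.hAB _ h2 h1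
  · intro τ h1
    by_cases hτ : τ = 0
    · rw [hτ]; exact hA'0
    · rw [reflect_eval _ _ hD _ hτ] at h1
      rw [Ne, reflect_eval _ _ hA _ hτ]
      intro h2; exact h.hAD _ (inv_ne_zero hτ) h2 h1
  · intro τ hτ h1
    rw [reflect_eval _ _ hB _ hτ] at h1
    rw [Ne, reflect_eval _ _ hD _ hτ]
    intro h2; exact h.hDB _ h2 h1
  · intro ζ h1 h2 h3
    have hζu : ζ ^ u = 1 := h1 u (by rw [z0 B hB]; exact hB0)
    have gen : ∀ f : ℂ[X], f.natDegree ≤ u → (∀ s, (reflect u f).coeff s ≠ 0 → ζ ^ s = 1) →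
        ∀ s, f.coeff s ≠ 0 → ζ ^ s = 1 := by
      intro f hf hh s hs
      have hsu : s ≤ u := (le_natDegree_of_ne_zero hs).trans hf
      have := hh (u - s) (by rw [reflect_coeff_of_le _ _ _ (by omega)]; rwa [Nat.sub_sub_self hsu])
      have e : ζ ^ s * ζ ^ (u - s) = 1 := by rw [← pow_add, Nat.add_sub_cancel' hsu, hζu]
      rwa [this, mul_one] at e
    exact h.hz ζ (gen A hA h2) (gen B hB h1) (gen D hD h3)

end

section
open Polynomial

/-- Exponents of the homogenization. -/
def hE (N : ℕ) (d : Fin 2 →₀ ℕ) : Fin 3 → ℕ := ![d 0, d 1, N - d 0 - d 1]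

/-- Evaluation of the homogenization of `φ`. -/
noncomputable def hev {R : Type*} [CommRing R] [Algebra ℂ R] (φ : MvPolynomial (Fin 2) ℂ)
    (Y : Fin 3 → R) : R :=
  ∑ d ∈ φ.support, algebraMap ℂ R (φ.coeff d) * ∏ l, Y l ^ hE φ.totalDegree d l

lemma deg_le (φ : MvPolynomial (Fin 2) ℂ) (d : Fin 2 →₀ ℕ) (hd : d ∈ φ.support) :
    d 0 + d 1 ≤ φ.totalDegree := by
  have := MvPolynomial.le_totalDegree hd
  rw [Finsupp.sum_fintype _ _ (fun _ => rfl)] at this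
  simpa [Fin.sum_univ_two] using this

lemma hE_sum (φ : MvPolynomial (Fin 2) ℂ) (d : Fin 2 →₀ ℕ) (hd : d ∈ φ.support) :
    ∑ l, hE φ.totalDegree d l = φ.totalDegree := by
  have := deg_le φ d hd
  simp [hE, Fin.sum_univ_three]
  omega

lemma hev_smul {R : Type*} [CommRing R] [Algebra ℂ R] (φ : MvPolynomial (Fin 2) ℂ)
    (Y : Fin 3 → R) (c : R) : hev φ (fun l => c * Y l) = c ^ φ.totalDegree * hev φ Y := by
  rw [hev, hev, Finset.mul_sum]
  refine Finset.sum_congr rfl fun d hd => ?_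
  simp only [mul_pow, Finset.prod_mul_distrib, Finset.prod_pow_eq_pow_sum, hE_sum φ d hd]
  ring

lemma hev_map {R S : Type*} [CommRing R] [Algebra ℂ R] [CommRing S] [Algebra ℂ S]
    (φ : MvPolynomial (Fin 2) ℂ) (Y : Fin 3 → R) (g : R →+* S)
    (hg : g.comp (algebraMap ℂ R) = algebraMap ℂ S) :
    g (hev φ Y) = hev φ (fun l => g (Y l)) := by
  rw [hev, hev, map_sum]
  refine Finset.sum_congr rfl fun d hd => ?_
  rw [map_mul, map_prod, ← hg]
  simp

lemma hev_one {R : Type*} [CommRing R] [Algebra ℂ R] (φ : MvPolynomial (Fin 2) ℂ) (a b : R) :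
    hev φ ![a, b, 1] = MvPolynomial.aeval ![a, b] φ := by
  rw [hev, MvPolynomial.aeval_def, MvPolynomial.eval₂_eq']
  refine Finset.sum_congr rfl fun d hd => ?_
  simp [Fin.prod_univ_three, Fin.prod_univ_two, hE]

lemma hev_div {K : Type*} [Field K] [Algebra ℂ K] (φ : MvPolynomial (Fin 2) ℂ) (Y : Fin 3 → K)
    (hY : Y 2 ≠ 0) : hev φ Y = Y 2 ^ φ.totalDegree *
      MvPolynomial.aeval ![Y 0 / Y 2, Y 1 / Y 2] φ := by
  rw [← hev_one, ← hev_smul]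
  congr 1
  funext l
  fin_cases l <;> simp [mul_div_cancel₀, hY]

/-- the substitution `X_i = x, X_j = 1, X_k = z` -/
noncomputable def YY (i k : Fin 3) : Fin 3 → ℂ[X][X] :=
  fun l => if l = i then C X else if l = k then X else 1

lemma univ_ijk (i j k : Fin 3) (hij : i ≠ j) (hik : i ≠ k) (hjk : j ≠ k) (l : Fin 3) :
    l = i ∨ l = j ∨ l = k := by
  revert i j k l; decide

lemma prod_ijk {R : Type*} [CommMonoid R] (i j k : Fin 3) (hij : i ≠ j) (hik : i ≠ k) (hjk : j ≠ k)
    (f : Fin 3 → R) : ∏ l, f l = f i * f j * f k := by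
  have : (Finset.univ : Finset (Fin 3)) = {i, j, k} := by
    ext l; simpa using univ_ijk i j k hij hik hjk l
  rw [this, Finset.prod_insert (by simp [hij, hik]), Finset.prod_insert (by simp [hjk]),
    Finset.prod_singleton, mul_assoc]

lemma sum_ijk {R : Type*} [AddCommMonoid R] (i j k : Fin 3) (hij : i ≠ j) (hik : i ≠ k)
    (hjk : j ≠ k) (f : Fin 3 → R) : ∑ l, f l = f i + f j + f k := by
  have : (Finset.univ : Finset (Fin 3)) = {i, j, k} := by
    ext l; simpa using univ_ijk i j k hij hik hjk l
  rw [this, Finset.sum_insert (by simp [hij, hik]), Finset.sum_insert (by simp [hjk]),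
    Finset.sum_singleton, add_assoc]

lemma hE_inj (N : ℕ) (d d' : Fin 2 →₀ ℕ) (h : hE N d = hE N d') : d = d' := by
  have h0 := congrFun h 0
  have h1 := congrFun h 1
  simp [hE] at h0 h1
  ext l; fin_cases l
  · exact h0
  · exact h1

lemma chart_coeff_sum (φ : MvPolynomial (Fin 2) ℂ) (i j k : Fin 3) (hij : i ≠ j) (hik : i ≠ k)
    (hjk : j ≠ k) (e m : ℕ) :
    ((hev φ (YY i k)).coeff m).coeff e = ∑ d ∈ φ.support,
      if hE φ.totalDegree d i = e ∧ hE φ.totalDegree d k = m then φ.coeff d else 0 := by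
  rw [hev, finsetSum_coeff, finsetSum_coeff]
  refine Finset.sum_congr rfl fun d hd => ?_
  rw [prod_ijk i j k hij hik hjk]
  have h1 : YY i k i = C X := by simp [YY]
  have h2 : YY i k j = 1 := by simp [YY, hij.symm, hjk]
  have h3 : YY i k k = X := by simp [YY, hik.symm]
  rw [h1, h2, h3, one_pow, mul_one, ← C_pow]
  have : algebraMap ℂ ℂ[X][X] (φ.coeff d) = C (C (φ.coeff d)) := rfl
  rw [this, coeff_C_mul, coeff_C_mul, coeff_C_mul_X_pow, apply_ite (fun p : ℂ[X] => p.coeff e),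
    coeff_X_pow, coeff_zero]
  by_cases ha : hE φ.totalDegree d i = e <;> by_cases hb : hE φ.totalDegree d k = m <;>
    simp [ha, hb, eq_comm] <;> simp_all [eq_comm]

lemma chart_coeff (φ : MvPolynomial (Fin 2) ℂ) (i j k : Fin 3) (hij : i ≠ j) (hik : i ≠ k)
    (hjk : j ≠ k) (e m : ℕ) :
    ((hev φ (YY i k)).coeff m).coeff e ≠ 0 ↔ ∃ d ∈ φ.support,
      hE φ.totalDegree d i = e ∧ hE φ.totalDegree d k = m := by
  rw [chart_coeff_sum φ i j k hij hik hjk]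
  constructor
  · intro h
    obtain ⟨d, hd, h⟩ := Finset.exists_ne_zero_of_sum_ne_zero h
    refine ⟨d, hd, ?_⟩
    by_contra hn
    rw [if_neg hn] at h; exact h rfl
  · rintro ⟨d, hd, he⟩
    rw [Finset.sum_eq_single_of_mem d hd, if_pos he]
    · exact MvPolynomial.mem_support_iff.1 hd
    · intro d' hd' hne
      rw [if_neg]
      rintro ⟨h1, h2⟩
      apply hne
      apply hE_inj φ.totalDegree
      funext l
      have s1 := hE_sum φ d hd
      have s2 := hE_sum φ d' hd'
      rw [sum_ijk i j k hij hik hjk] at s1 s2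
      rcases univ_ijk i j k hij hik hjk l with rfl | rfl | rfl <;> omega

end

section
open Polynomial

/-- homogeneous coordinates of the affine plane -/
noncomputable def XX : Fin 3 → MvPolynomial (Fin 2) ℂ := ![MvPolynomial.X 0, MvPolynomial.X 1, 1]

lemma aeval_XX {K : Type} [Field K] [Algebra ℂ K] (Y : Fin 3 → K) (hY : ∀ l, Y l ≠ 0)
    (l : Fin 3) : MvPolynomial.aeval ![Y 0 / Y 2, Y 1 / Y 2] (XX l) = Y l / Y 2 := by
  fin_cases l
  · simp [XX]
  · simp [XX]
  · simp [XX, hY 2]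

/-- `g` in the chart `j` is represented by the affine polynomial `G`. -/
def ChRep (i j k : Fin 3) (g : ℂ[X][X]) (m : ℕ) (G : MvPolynomial (Fin 2) ℂ) : Prop :=
  ∀ (K : Type) [Field K] [Algebra ℂ K] (Y : Fin 3 → K), (∀ l, Y l ≠ 0) →
    ev2 (Y i / Y j) (Y k / Y j) g * (Y j / Y 2) ^ m =
      MvPolynomial.aeval ![Y 0 / Y 2, Y 1 / Y 2] G

lemma ChRep.add {i j k : Fin 3} {g g' : ℂ[X][X]} {m m' : ℕ} {G G' : MvPolynomial (Fin 2) ℂ}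
    (h : ChRep i j k g m G) (h' : ChRep i j k g' m' G') :
    ChRep i j k (g + g') (m + m') (G * XX j ^ m' + G' * XX j ^ m) := by
  intro K _ _ Y hY
  rw [map_add, map_add, map_mul, map_mul, map_pow, map_pow, aeval_XX Y hY, ← h K Y hY,
    ← h' K Y hY]
  ring

lemma ChRep.mul {i j k : Fin 3} {g g' : ℂ[X][X]} {m m' : ℕ} {G G' : MvPolynomial (Fin 2) ℂ}
    (h : ChRep i j k g m G) (h' : ChRep i j k g' m' G') :
    ChRep i j k (g * g') (m + m') (G * G') := by
  intro K _ _ Y hY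
  rw [map_mul, map_mul, ← h K Y hY, ← h' K Y hY]
  ring

lemma ChRep.const (i j k : Fin 3) (c : ℂ) : ChRep i j k (C (C c)) 0 (MvPolynomial.C c) := by
  intro K _ _ Y hY
  have := congrArg (fun f => f c) (ev2_comp (Y i / Y j) (Y k / Y j))
  simp only [RingHom.comp_apply] at this
  rw [this]
  simp

lemma ChRep.xX (i j k : Fin 3) : ChRep i j k (C X) 1 (XX i) := by
  intro K _ _ Y hY
  rw [ev2_CX, aeval_XX Y hY]
  have := hY j; have := hY 2
  field_simp

lemma ChRep.zX (i j k : Fin 3) : ChRep i j k X 1 (XX k) := by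
  intro K _ _ Y hY
  rw [ev2_X, aeval_XX Y hY]
  have := hY j; have := hY 2
  field_simp

lemma ChRep.exists (i j k : Fin 3) (g : ℂ[X][X]) : ∃ m G, ChRep i j k g m G := by
  have hC : ∀ a : ℂ[X], ∃ m G, ChRep i j k (C a) m G := by
    intro a
    induction a using Polynomial.induction_on with
    | C c => exact ⟨_, _, ChRep.const i j k c⟩
    | add p q hp hq =>
      obtain ⟨m, G, h⟩ := hp
      obtain ⟨m', G', h'⟩ := hq
      exact ⟨_, _, by rw [C_add]; exact h.add h'⟩
    | monomial n c h =>
      obtain ⟨m, G, h⟩ := h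
      exact ⟨_, _, by rw [pow_succ, ← mul_assoc, C_mul]; exact h.mul (ChRep.xX i j k)⟩
  induction g using Polynomial.induction_on with
  | C c => exact hC c
  | add p q hp hq =>
    obtain ⟨m, G, h⟩ := hp
    obtain ⟨m', G', h'⟩ := hq
    exact ⟨_, _, h.add h'⟩
  | monomial n c h =>
    obtain ⟨m, G, h⟩ := h
    exact ⟨_, _, by rw [pow_succ, ← mul_assoc]; exact h.mul (ChRep.zX i j k)⟩

/-- Clearing denominators in the chart. -/
lemma clear_den {K : Type} [Field K] [Algebra ℂ[X][X] K] [Algebra ℂ K]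
    [IsScalarTower ℂ ℂ[X][X] K] (y : Fin 3 → ℂ[X][X]) (hy : algebraMap ℂ[X][X] K (y 2) ≠ 0)
    (H : MvPolynomial (Fin 2) ℂ) : ∃ (m : ℕ) (h : ℂ[X][X]), algebraMap ℂ[X][X] K h =
      MvPolynomial.aeval ![algebraMap _ K (y 0) / algebraMap _ K (y 2),
        algebraMap _ K (y 1) / algebraMap _ K (y 2)] H * algebraMap _ K (y 2) ^ m := by
  refine ⟨H.totalDegree, hev H y, ?_⟩
  rw [hev_map H y (algebraMap ℂ[X][X] K) (IsScalarTower.algebraMap_eq ℂ ℂ[X][X] K).symm,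
    hev_div _ _ hy, mul_comm]

/-- relation between chart and homogenization -/
lemma hev_chart {K : Type*} [Field K] [Algebra ℂ K] (φ : MvPolynomial (Fin 2) ℂ) (i j k : Fin 3)
    (hij : i ≠ j) (hik : i ≠ k) (hjk : j ≠ k) (Y : Fin 3 → K) (hY : ∀ l, Y l ≠ 0) :
    hev φ Y = Y j ^ φ.totalDegree * ev2 (Y i / Y j) (Y k / Y j) (hev φ (YY i k)) := by
  rw [hev_map φ (YY i k) (ev2 (Y i / Y j) (Y k / Y j)) (ev2_comp _ _), ← hev_smul]
  congr 1
  funext l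
  have := hY j
  rcases univ_ijk i j k hij hik hjk l with rfl | rfl | rfl
  · simp only [YY, if_true, ev2_CX]; field_simp
  · simp [YY, hij.symm, hjk]
  · simp only [YY, hik.symm, if_true, if_false, ev2_X]; field_simp

lemma exists_top (φ : MvPolynomial (Fin 2) ℂ) (h : φ ≠ 0) :
    ∃ d ∈ φ.support, hE φ.totalDegree d 2 = 0 := by
  obtain ⟨d, hd, he⟩ := Finset.exists_mem_eq_sup φ.support (MvPolynomial.support_nonempty.2 h)
    (fun s => s.sum fun _ e => e)
  refine ⟨d, hd, ?_⟩
  have h1 : φ.totalDegree = d 0 + d 1 := by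
    rw [MvPolynomial.totalDegree, he, Finsupp.sum_fintype _ _ (fun _ => rfl), Fin.sum_univ_two]
  simp [hE, h1]

lemma chart_not_dvd (φ : MvPolynomial (Fin 2) ℂ) (h : φ ≠ 0) (i j k : Fin 3)
    (hij : i ≠ j) (hik : i ≠ k) (hjk : j ≠ k) (h2 : YY i k 2 ∣ hev φ (YY i k)) : j = 2 := by
  by_contra hj
  obtain ⟨d, hd, h0⟩ := exists_top φ h
  have hc := (chart_coeff φ i j k hij hik hjk _ _).2 ⟨d, hd, rfl, rfl⟩
  obtain ⟨q, hq⟩ := h2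
  rcases univ_ijk i j k hij hik hjk 2 with h | h | h
  · subst h
    rw [hq, h0] at hc
    simp [YY] at hc
  · exact hj h.symm
  · subst h
    rw [hq, h0] at hc
    simp [YY, hik.symm] at hc

lemma clear_aux {K : Type} [Field K] (p H w : K) (hw : w ≠ 0) (m1 m2 N m : ℕ)
    (e : p * (1 / w) ^ m2 * H * (1 / w) ^ N = (1 / w) ^ (m1 + m2)) :
    w ^ (m2 + N + m) = p * (H * w ^ m * w ^ (m1 + m2)) := by
  have h1 : ∀ n, (1 / w) ^ n * w ^ n = 1 := fun n => by
    rw [← mul_pow, one_div, inv_mul_cancel₀ hw, one_pow]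
  have e2 := congrArg (fun q => q * (w ^ m2 * w ^ N * w ^ m * w ^ (m1 + m2))) e
  have e3 : p * (1 / w) ^ m2 * H * (1 / w) ^ N * (w ^ m2 * w ^ N * w ^ m * w ^ (m1 + m2)) =
      p * (H * w ^ m * w ^ (m1 + m2)) * ((1 / w) ^ m2 * w ^ m2) * ((1 / w) ^ N * w ^ N) := by ring
  have e4 : (1 / w) ^ (m1 + m2) * (w ^ m2 * w ^ N * w ^ m * w ^ (m1 + m2)) =
      w ^ (m2 + N + m) * ((1 / w) ^ (m1 + m2) * w ^ (m1 + m2)) := by ring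
  rw [e3, e4, h1, h1, h1] at e2
  rw [← mul_one (w ^ _), ← e2]; ring

lemma chart_const (φ : MvPolynomial (Fin 2) ℂ) (hφ : Irreducible φ) (i j k : Fin 3)
    (hij : i ≠ j) (hik : i ≠ k) (hjk : j ≠ k) (Y : Fin 3 → RatFunc ℂ) (hY : ∀ l, Y l ≠ 0)
    (hv : hev φ Y = 0) (R : ℂ[X][X]) (hR : ev2 (Y i / Y j) (Y k / Y j) R = 0)
    (hd : R ∣ hev φ (YY i k)) : ∃ κ : ℂ, κ ≠ 0 ∧ hev φ (YY i k) = C (C κ) * R := by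
  obtain ⟨ψ, hψ⟩ := hd
  obtain ⟨m1, GR, hGR⟩ := ChRep.exists i j k R
  obtain ⟨m2, Gψ, hGψ⟩ := ChRep.exists i j k ψ
  set N := φ.totalDegree
  have hprime : Prime φ := hφ.prime
  have hφ0 : MvPolynomial.aeval ![Y 0 / Y 2, Y 1 / Y 2] φ = 0 := by
    rw [hev_div φ Y (hY 2)] at hv
    exact (mul_eq_zero.1 hv).resolve_left (pow_ne_zero _ (hY 2))
  -- identity in the polynomial ring
  have hXX : ∀ l, XX l ≠ 0 := by
    intro l; fin_cases l <;> simp [XX]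
  have key : φ * XX j ^ (m1 + m2) = GR * Gψ * XX j ^ N := by
    let K := FractionRing (MvPolynomial (Fin 2) ℂ)
    apply IsFractionRing.injective (MvPolynomial (Fin 2) ℂ) K
    let y : Fin 3 → K := fun l => algebraMap _ K (XX l)
    have hy : ∀ l, y l ≠ 0 := fun l => by
      simpa [y] using hXX l
    have hy2 : y 2 = 1 := by simp [y, XX]
    have hae : ∀ G : MvPolynomial (Fin 2) ℂ,
        MvPolynomial.aeval ![y 0 / y 2, y 1 / y 2] G = algebraMap _ K G := by
      intro G
      rw [hy2, div_one, div_one]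
      have h1 : ![y 0, y 1] = algebraMap (MvPolynomial (Fin 2) ℂ) K ∘ MvPolynomial.X := by
        funext l; fin_cases l <;> simp [y, XX]
      rw [h1, MvPolynomial.aeval_algebraMap_apply]
      simp
    have e1 := hGR K y hy
    have e2 := hGψ K y hy
    have e3 := hev_chart φ i j k hij hik hjk y hy
    rw [hev_div φ y (hy 2), hae, hψ, map_mul] at e3
    rw [hae] at e1 e2
    rw [hy2, div_one] at e1 e2
    rw [hy2, one_pow, one_mul] at e3
    rw [map_mul, map_mul, map_mul, map_pow, map_pow, e3, ← e1, ← e2]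
    change _ * (y j) ^ _ = _ * (y j) ^ _
    ring
  have evXX : ∀ n, MvPolynomial.aeval ![Y 0 / Y 2, Y 1 / Y 2] (XX j ^ n) ≠ 0 := by
    intro n
    rw [map_pow, aeval_XX Y hY]
    exact pow_ne_zero _ (div_ne_zero (hY j) (hY 2))
  have evGR : MvPolynomial.aeval ![Y 0 / Y 2, Y 1 / Y 2] GR = 0 := by
    rw [← hGR _ Y hY, hR, zero_mul]
  have nd : ∀ n, ¬ φ ∣ XX j ^ n := by
    rintro n ⟨q, hq⟩
    apply evXX n
    rw [hq, map_mul, hφ0, zero_mul]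
  obtain ⟨H, hH⟩ : ∃ H, Gψ * H * XX j ^ N = XX j ^ (m1 + m2) := by
    have : φ ∣ GR * Gψ * XX j ^ N := ⟨_, key.symm⟩
    rcases (hprime.dvd_or_dvd this).imp_left hprime.dvd_or_dvd with (⟨H, h⟩ | ⟨H, h⟩) | h
    · refine ⟨H, mul_left_cancel₀ hprime.ne_zero ?_⟩
      rw [key, h]; ring
    · exfalso
      apply evXX (m1 + m2)
      have : XX j ^ (m1 + m2) = GR * H * XX j ^ N := by
        apply mul_left_cancel₀ hprime.ne_zero
        rw [key, h]; ring
      rw [this, map_mul, map_mul, evGR]; simp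
    · exact absurd h (nd N)
  -- transfer back
  have hψu : IsUnit ψ := by
    have hyy : ∀ l, YY i k l ≠ 0 := by
      intro l
      unfold YY
      split_ifs
      · exact C_ne_zero.2 X_ne_zero
      · exact X_ne_zero
      · exact one_ne_zero
    have hdv : ∃ M, ψ ∣ YY i k 2 ^ M := by
      let K := FractionRing ℂ[X][X]
      let y : Fin 3 → K := fun l => algebraMap _ K (YY i k l)
      have hinj := IsFractionRing.injective ℂ[X][X] K
      have hy : ∀ l, y l ≠ 0 := fun l => by
        simpa [y] using hyy l
      have hyj : y j = 1 := by simp [y, YY, hij.symm, hjk]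
      have hyi : y i = algebraMap ℂ[X][X] K (C X) := by simp [y, YY]
      have hyk : y k = algebraMap ℂ[X][X] K X := by simp [y, YY, hik.symm]
      have hev2 : ∀ g, ev2 (y i / y j) (y k / y j) g = algebraMap ℂ[X][X] K g := by
        intro g
        rw [hyj, div_one, div_one, hyi, hyk]
        have : ev2 (algebraMap ℂ[X][X] K (C X)) (algebraMap ℂ[X][X] K X) =
            algebraMap ℂ[X][X] K := by
          apply Polynomial.ringHom_ext'
          · apply Polynomial.ringHom_ext'
            · ext c
              simp only [RingHom.comp_apply]
              have := congrArg (fun f => f c)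
                (ev2_comp (algebraMap ℂ[X][X] K (C X)) (algebraMap ℂ[X][X] K X))
              simp only [RingHom.comp_apply] at this
              rw [this, IsScalarTower.algebraMap_apply ℂ ℂ[X][X] K]
              rfl
            · simp only [RingHom.comp_apply, ev2_CX]
          · exact ev2_X _ _
        rw [this]
      obtain ⟨m, h, hh⟩ := clear_den (K := K) (YY i k) (hy 2) H
      have e2 := hGψ K y hy
      rw [hev2] at e2
      have e4 := congrArg (MvPolynomial.aeval ![y 0 / y 2, y 1 / y 2]) hH
      rw [map_mul, map_mul, map_pow, map_pow, aeval_XX y hy, ← e2] at e4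
      change algebraMap _ K h = MvPolynomial.aeval ![y 0 / y 2, y 1 / y 2] H * y 2 ^ m at hh
      rw [hyj] at e4
      refine ⟨m2 + N + m, h * YY i k 2 ^ (m1 + m2), ?_⟩
      apply hinj
      have h2 := hy 2
      rw [map_mul, map_mul, map_pow, map_pow, hh]
      change y 2 ^ _ = _ * (_ * y 2 ^ _)
      exact clear_aux _ _ _ h2 _ _ _ _ e4
    obtain ⟨M, hM⟩ := hdv
    by_cases hj2 : j = 2
    · have : YY i k 2 = 1 := by
        subst hj2
        simp [YY, hij.symm, hjk]
      rw [this, one_pow] at hM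
      exact isUnit_of_dvd_one hM
    have hp : Prime (YY i k 2) := by
      rcases univ_ijk i j k hij hik hjk 2 with h | h | h
      · subst h
        simp only [YY, if_true]
        exact Polynomial.prime_C_iff.2 Polynomial.prime_X
      · exact absurd h.symm hj2
      · subst h
        simp only [YY, hik.symm, if_true, if_false]
        exact Polynomial.prime_X
    obtain ⟨n, -, hn⟩ := (dvd_prime_pow hp _).1 hM
    rcases Nat.eq_zero_or_pos n with rfl | hn0
    · rw [pow_zero] at hn
      exact hn.symm.isUnit isUnit_one
    · exfalso
      apply hj2
      apply chart_not_dvd φ hφ.ne_zero i j k hij hik hjk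
      rw [hψ]
      exact ((dvd_pow_self _ hn0.ne').trans hn.symm.dvd).trans (dvd_mul_left _ _)
  obtain ⟨r, hr, hr2⟩ := Polynomial.isUnit_iff.1 hψu
  obtain ⟨κ, hκ, hκ2⟩ := Polynomial.isUnit_iff.1 hr
  refine ⟨κ, hκ.ne_zero, ?_⟩
  rw [hψ, ← hr2, ← hκ2, mul_comm]

end

section
open Polynomial

lemma Good.chart {φ : MvPolynomial (Fin 2) ℂ} (hφ : Irreducible φ) {i j k : Fin 3}
    (hij : i ≠ j) (hik : i ≠ k) (hjk : j ≠ k) {P : Fin 3 → ℂ[X]} {u : ℕ}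
    (h : Good (P i) (P j) (P k) u)
    (hv : hev φ (fun l => algebraMap ℂ[X] (RatFunc ℂ) (P l)) = 0) :
    ∃ κ : ℂ, κ ≠ 0 ∧ hev φ (YY i k) = C (C κ) * RR (P i) (P j) (P k) u := by
  have hY : ∀ l, algebraMap ℂ[X] (RatFunc ℂ) (P l) ≠ 0 := by
    intro l
    rw [Ne, FaithfulSMul.algebraMap_eq_zero_iff]
    rcases univ_ijk i j k hij hik hjk l with rfl | rfl | rfl
    · exact h.hAne
    · exact h.hBne
    · exact h.hDne
  have hc := hev_chart φ i j k hij hik hjk (fun l => algebraMap ℂ[X] (RatFunc ℂ) (P l)) hY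
  rw [hv] at hc
  have hf := (mul_eq_zero.1 hc.symm).resolve_left (pow_ne_zero _ (hY j))
  exact chart_const φ hφ i j k hij hik hjk _ hY hv _ h.RR_vanish' (h.RR_dvd _ hf)

lemma Good.chart_supp {φ : MvPolynomial (Fin 2) ℂ} (hφ : Irreducible φ) {i j k : Fin 3}
    (hij : i ≠ j) (hik : i ≠ k) (hjk : j ≠ k) {P : Fin 3 → ℂ[X]} {u : ℕ}
    (h : Good (P i) (P j) (P k) u)
    (hv : hev φ (fun l => algebraMap ℂ[X] (RatFunc ℂ) (P l)) = 0) (e m : ℕ) :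
    ((RR (P i) (P j) (P k) u).coeff m).coeff e ≠ 0 ↔ ∃ d ∈ φ.support,
      hE φ.totalDegree d i = e ∧ hE φ.totalDegree d k = m := by
  obtain ⟨κ, hκ, hc⟩ := h.chart hφ hij hik hjk hv
  rw [← chart_coeff φ i j k hij hik hjk, hc, coeff_C_mul, coeff_C_mul]
  simp [hκ]

lemma hev_reflect (φ : MvPolynomial (Fin 2) ℂ) (P : Fin 3 → ℂ[X]) (u : ℕ)
    (hP : ∀ l, (P l).natDegree ≤ u)
    (hv : hev φ (fun l => algebraMap ℂ[X] (RatFunc ℂ) (P l)) = 0) :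
    hev φ (fun l => algebraMap ℂ[X] (RatFunc ℂ) (reflect u (P l))) = 0 := by
  have h0 : hev φ P = 0 := by
    apply IsFractionRing.injective ℂ[X] (RatFunc ℂ)
    rw [hev_map φ P (algebraMap ℂ[X] (RatFunc ℂ)) (IsScalarTower.algebraMap_eq ℂ ℂ[X] _).symm, hv,
      map_zero]
  let t : RatFunc ℂ := RatFunc.X
  have ht : t ≠ 0 := RatFunc.X_ne_zero
  have h1 : hev φ (fun l => aeval t⁻¹ (P l)) = 0 := by
    have := hev_map φ P (aeval t⁻¹ : ℂ[X] →ₐ[ℂ] RatFunc ℂ).toRingHom (by ext c; simp)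
    rw [h0, map_zero] at this
    exact this.symm
  have h2 : (fun l => algebraMap ℂ[X] (RatFunc ℂ) (reflect u (P l))) =
      fun l => t ^ u * aeval t⁻¹ (P l) := by
    funext l
    rw [← aeval_X_rf]
    change aeval t _ = _
    have : Invertible t := invertibleOfNonzero ht
    have := eval₂_reflect_mul_pow (algebraMap ℂ (RatFunc ℂ)) t u (reflect u (P l))
      (reflect_natDegree_le u _ (hP l))
    rw [reflect_reflect, invOf_eq_inv] at this
    rw [aeval_def, aeval_def, ← this, mul_comm]
  rw [h2, hev_smul, h1, mul_zero]

lemma Good.degs {i j k : Fin 3}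
    (hij : i ≠ j) (hik : i ≠ k) (hjk : j ≠ k) {P : Fin 3 → ℂ[X]} {u : ℕ}
    (h : Good (P i) (P j) (P k) u) (l : Fin 3) : (P l).natDegree ≤ u := by
  rcases univ_ijk i j k hij hik hjk l with rfl | rfl | rfl
  · exact h.hA.le
  · exact h.hB.le
  · exact h.hD.le

/-- What we know about the support of `φ`. -/
structure SuppInfo (φ : MvPolynomial (Fin 2) ℂ) (i j k : Fin 3) (u a b c d : ℕ) : Prop where
  deg : φ.totalDegree = u
  v1 : ∃ s ∈ φ.support, hE u s j = 0 ∧ hE u s k = u - b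
  v2 : ∃ s ∈ φ.support, hE u s i = d ∧ hE u s k = 0
  v3 : ∃ s ∈ φ.support, hE u s i = c ∧ hE u s k = 0
  v4 : ∃ s ∈ φ.support, hE u s i = 0 ∧ hE u s k = a
  v5 : ∃ s ∈ φ.support, hE u s i = 0 ∧ hE u s k = u
  w1 : ∀ s ∈ φ.support, a * c ≤ a * hE u s i + c * hE u s k
  w2 : ∀ s ∈ φ.support, (u - b) * (u - d) ≤ (u - b) * hE u s j + (u - d) * hE u s k

theorem Good.suppInfo {φ : MvPolynomial (Fin 2) ℂ} (hφ : Irreducible φ) {i j k : Fin 3}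
    (hij : i ≠ j) (hik : i ≠ k) (hjk : j ≠ k) {P : Fin 3 → ℂ[X]} {u : ℕ}
    (h : Good (P i) (P j) (P k) u)
    (hv : hev φ (fun l => algebraMap ℂ[X] (RatFunc ℂ) (P l)) = 0) (a b c d : ℕ)
    (hau : a ≤ u) (hcu : c ≤ u)
    (ha : ∀ l < a, (P i).coeff l = 0) (ha' : (P i).coeff a ≠ 0)
    (hb : (P j).natDegree = b) (hc : ∀ l < c, (P k).coeff l = 0) (hc' : (P k).coeff c ≠ 0)
    (hd : (P k).natDegree = d) : SuppInfo φ i j k u a b c d := by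
  have h2 : Good (reflect u (P j)) (reflect u (P i)) (reflect u (P k)) u := h.refl
  have hv2 := hev_reflect φ P u (h.degs hij hik hjk) hv
  have C1 := fun e m => h.chart_supp hφ hij hik hjk hv e m
  have C2 := fun e m => Good.chart_supp (P := fun l => reflect u (P l)) hφ hij.symm hjk hik h2 hv2 e m
  have hbu : b < u := hb ▸ h.hB
  have hdu : d < u := hd ▸ h.hD
  have rA := rootMult_of_coeff _ _ ha ha'
  have rD := rootMult_of_coeff _ _ hc hc'
  have cB : ∀ l < u - b, (reflect u (P j)).coeff l = 0 := by
    intro l hl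
    rw [reflect_coeff_of_le _ _ _ (by omega)]
    exact coeff_eq_zero_of_natDegree_lt (by omega)
  have cD : ∀ l < u - d, (reflect u (P k)).coeff l = 0 := by
    intro l hl
    rw [reflect_coeff_of_le _ _ _ (by omega)]
    exact coeff_eq_zero_of_natDegree_lt (by omega)
  have rB : (reflect u (P j)).rootMultiplicity 0 = u - b := by
    apply rootMult_of_coeff _ _ cB
    rw [reflect_coeff_of_le _ _ _ (by omega), Nat.sub_sub_self hbu.le, ← hb]
    exact leadingCoeff_ne_zero.2 h.hBne
  have hdeg : φ.totalDegree = u := by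
    obtain ⟨s, hs, e1, e2⟩ := (C1 _ _).1 h.RR_x0.1
    obtain ⟨-, κ, hκ, hk⟩ := h2.RR_top
    have := (C2 (hE φ.totalDegree s j) (hE φ.totalDegree s k)).2 ⟨s, hs, rfl, rfl⟩
    rw [e2, hk, coeff_C] at this
    have e3 : hE φ.totalDegree s j = 0 := by
      by_contra hne
      rw [if_neg hne] at this; exact this rfl
    have := hE_sum φ s hs
    rw [sum_ijk i j k hij hik hjk] at this
    omega
  rw [hdeg] at C1 C2
  refine ⟨hdeg, ?_, ?_, ?_, ?_, ?_, ?_, ?_⟩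
  · have := h2.RR_x0.2
    rw [rB] at this
    exact (C2 _ _).1 this
  · have := h.RR_z0.1
    rw [hd] at this
    exact (C1 _ _).1 this
  · have := h.RR_z0.2
    rw [rD] at this
    exact (C1 _ _).1 this
  · have := h.RR_x0.2
    rw [rA] at this
    exact (C1 _ _).1 this
  · exact (C1 _ _).1 h.RR_x0.1
  · intro s hs
    have := Wt_RR _ (P j) _ u a c hau hcu ha hc _ _ ((C1 _ _).2 ⟨s, hs, rfl, rfl⟩)
    exact_mod_cast this
  · intro s hs
    have := Wt_RR _ (reflect u (P i)) _ u (u - b) (u - d) (by omega) (by omega) cB cD _ _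
      ((C2 _ _).2 ⟨s, hs, rfl, rfl⟩)
    exact_mod_cast this

end

section
open Polynomial

lemma geo (a b c d u X Y : ℝ) (hb : 0 ≤ b) (hc : 0 < c) (hcd : c ≤ d) (hdu : d < u)
    (hau : a ≤ u) (hX : 0 ≤ X) (hY : 0 ≤ Y) (hXY : X + Y ≤ u)
    (h1 : a * c ≤ a * X + c * (u - X - Y))
    (h2 : (u - b) * (u - d) ≤ (u - b) * Y + (u - d) * (u - X - Y)) :
    ∃ w1 w2 w3 w4 w5 : ℝ, 0 ≤ w1 ∧ 0 ≤ w2 ∧ 0 ≤ w3 ∧ 0 ≤ w4 ∧ 0 ≤ w5 ∧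
      w1 + w2 + w3 + w4 + w5 = 1 ∧ X = w1 * b + w2 * d + w3 * c ∧
      Y = w2 * (u - d) + w3 * (u - c) + w4 * (u - a) := by
  have hu : 0 < u := by linarith
  obtain ⟨s, hs⟩ : ∃ s, X + Y = s * u := ⟨(X + Y) / u, by field_simp⟩
  have hs0 : 0 ≤ s := by
    by_contra hn; push Not at hn; nlinarith
  have hs1 : s ≤ 1 := by
    by_contra hn; push Not at hn; nlinarith
  rcases le_total (d * s) X with r1 | r1
  · obtain ⟨β, hβ⟩ : ∃ β, Y = β * (u - d) := ⟨Y / (u - d), by field_simp [sub_ne_zero.2 hdu.ne']⟩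
    have hud : 0 < u - d := by linarith
    have hβ0 : 0 ≤ β := by
      by_contra hn; push Not at hn; nlinarith
    have h2' : X ≤ (d - b) * β + b := by
      have : 0 ≤ (u - d) * ((d - b) * β + b - X) := by
        subst hβ; nlinarith
      nlinarith [nonneg_of_mul_nonneg_right this hud]
    have hX1 : β * d ≤ X := by
      have : 0 ≤ (u - d) * (X - β * d) := by
        have : d * (s * u) ≤ X * u := by nlinarith
        rw [← hs, hβ] at this
        nlinarith
      linarith [nonneg_of_mul_nonneg_right this hud]
    rcases hb.eq_or_lt with hb0 | hb0
    · subst hb0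
      have hXe : X = β * d := by nlinarith
      have : β = s := by
        apply mul_right_cancel₀ hu.ne'
        rw [← hs, hXe, hβ]; ring
      exact ⟨0, β, 0, 0, 1 - β, by norm_num, hβ0, by norm_num, by norm_num, by linarith,
        by ring, by linarith, by linarith⟩
    · obtain ⟨α, hα⟩ : ∃ α, X - β * d = α * b := ⟨(X - β * d) / b, by field_simp⟩
      have hα0 : 0 ≤ α := by
        by_contra hn; push Not at hn; nlinarith
      have : α + β ≤ 1 := by
        by_contra hn; push Not at hn; nlinarith
      exact ⟨α, β, 0, 0, 1 - α - β, hα0, hβ0, by norm_num, by norm_num, by linarith,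
        by ring, by linarith, by linarith⟩
  rcases le_total (c * s) X with r2 | r2
  · rcases hcd.eq_or_lt with hcd0 | hcd0
    · subst hcd0
      have : X = s * c := by nlinarith
      exact ⟨0, s, 0, 0, 1 - s, by norm_num, hs0, by norm_num, by norm_num, by linarith,
        by ring, by linarith, by nlinarith⟩
    · have hdc : 0 < d - c := by linarith
      obtain ⟨β, hβ⟩ : ∃ β, X - c * s = β * (d - c) := ⟨(X - c * s) / (d - c), by field_simp⟩
      have hβ0 : 0 ≤ β := by
        by_contra hn; push Not at hn; nlinarith
      have hβs : β ≤ s := by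
        by_contra hn; push Not at hn; nlinarith
      exact ⟨0, β, s - β, 0, 1 - s, by norm_num, hβ0, by linarith, by norm_num, by linarith,
        by ring, by linarith, by nlinarith⟩
  · obtain ⟨γ, hγ⟩ : ∃ γ, X = γ * c := ⟨X / c, by field_simp⟩
    have hγ0 : 0 ≤ γ := by
      by_contra hn; push Not at hn; nlinarith
    have hγs : γ ≤ s := by
      by_contra hn; push Not at hn; nlinarith
    have h1' : u - X - Y + a * γ ≥ a := by
      have : 0 ≤ c * (u - X - Y + a * γ - a) := by rw [hγ] at h1 ⊢; nlinarith
      nlinarith [nonneg_of_mul_nonneg_right this hc]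
    have hYs : γ * (u - c) ≤ Y := by
      have : 0 ≤ (s - γ) * u := by nlinarith
      nlinarith
    rcases hau.eq_or_lt with hau0 | hau0
    · subst hau0
      have : Y = γ * (a - c) := by nlinarith
      exact ⟨0, 0, γ, 0, 1 - γ, by norm_num, by norm_num, hγ0, by norm_num, by linarith,
        by ring, by linarith, by linarith⟩
    · have hua : 0 < u - a := by linarith
      obtain ⟨δ, hδ⟩ : ∃ δ, Y - γ * (u - c) = δ * (u - a) :=
        ⟨(Y - γ * (u - c)) / (u - a), by field_simp⟩
      have hδ0 : 0 ≤ δ := by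
        by_contra hn; push Not at hn; nlinarith
      have : γ + δ ≤ 1 := by
        by_contra hn; push Not at hn; nlinarith
      exact ⟨0, 0, γ, δ, 1 - γ - δ, by norm_num, by norm_num, hγ0, hδ0, by linarith,
        by ring, by linarith, by linarith⟩

end

section
open Polynomial

lemma implicitPoint_eq (i j k : Fin 3) (hij : i ≠ j) (hik : i ≠ k) (hjk : j ≠ k) (u α β : ℕ)
    (E : Fin 3 → ℕ) (hi : E i = α) (hj : E j = β) (hk : E k = u - α - β) :
    implicitPoint i j u α β = ((E 0 : ℝ), (E 1 : ℝ)) := by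
  have key : ∀ l : Fin 3, (if l = i then α else if l = j then β else u - α - β : ℕ) = E l := by
    intro l
    rcases univ_ijk i j k hij hik hjk l with rfl | rfl | rfl
    · simp [hi]
    · simp [hij.symm, hj]
    · simp [hik.symm, hjk.symm, hk]
  unfold implicitPoint
  rw [key 0, key 1]

lemma five_mem (T : Set (ℝ × ℝ)) (hT : Convex ℝ T) (p1 p2 p3 p4 p5 : ℝ × ℝ) (h1 : p1 ∈ T)
    (h2 : p2 ∈ T) (h3 : p3 ∈ T) (h4 : p4 ∈ T) (h5 : p5 ∈ T) (w1 w2 w3 w4 w5 : ℝ)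
    (k1 : 0 ≤ w1) (k2 : 0 ≤ w2) (k3 : 0 ≤ w3) (k4 : 0 ≤ w4) (k5 : 0 ≤ w5)
    (hw : w1 + w2 + w3 + w4 + w5 = 1) :
    w1 • p1 + w2 • p2 + w3 • p3 + w4 • p4 + w5 • p5 ∈ T := by
  have := hT.sum_mem (t := Finset.univ) (w := ![w1, w2, w3, w4, w5]) (z := ![p1, p2, p3, p4, p5])
    (by intro i _; fin_cases i <;> simpa) (by simpa [Fin.sum_univ_five] using hw)
    (by intro i _; fin_cases i <;> simpa)
  simpa [Fin.sum_univ_five] using this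

theorem SuppInfo.polygon {φ : MvPolynomial (Fin 2) ℂ} {i j k : Fin 3}
    (hij : i ≠ j) (hik : i ≠ k) (hjk : j ≠ k) {u a b c d : ℕ} (h : SuppInfo φ i j k u a b c d)
    (hau : a ≤ u) (hbu : b < u) (hc : 0 < c) (hcd : c ≤ d) (hdu : d < u) :
    newtonPolygon φ = convexHull ℝ
            {implicitPoint i j u b 0,
             implicitPoint i j u d (u - d),
             implicitPoint i j u c (u - c),
             implicitPoint i j u 0 (u - a),
             implicitPoint i j u 0 0} := by
  have hsum : ∀ s ∈ φ.support, hE u s i + hE u s j + hE u s k = u := by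
    intro s hs
    have := hE_sum φ s hs
    rwa [h.deg, sum_ijk i j k hij hik hjk] at this
  have hpt : ∀ s : Fin 2 →₀ ℕ, ((s 0 : ℝ), (s 1 : ℝ)) = ((hE u s 0 : ℝ), (hE u s 1 : ℝ)) := by
    intro s; simp [hE]
  unfold newtonPolygon
  apply Set.Subset.antisymm
  · apply convexHull_min _ (convex_convexHull ℝ _)
    rintro _ ⟨s, hs, rfl⟩
    have hs' : s ∈ φ.support := hs
    have hsu := hsum s hs'
    have w1 := h.w1 s hs'
    have w2 := h.w2 s hs'
    have hsu' : (hE u s i : ℝ) + hE u s j + hE u s k = u := by exact_mod_cast hsu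
    have w1' : (a : ℝ) * c ≤ a * hE u s i + c * hE u s k := by exact_mod_cast w1
    have w2' : ((u : ℝ) - b) * (u - d) ≤ (u - b) * hE u s j + (u - d) * hE u s k := by
      have : (((u - b) * (u - d) : ℕ) : ℝ) ≤ (((u - b) * hE u s j + (u - d) * hE u s k : ℕ) : ℝ) := by
        exact_mod_cast w2
      push_cast [Nat.cast_sub hbu.le, Nat.cast_sub hdu.le] at this
      exact this
    have ek : (hE u s k : ℝ) = u - hE u s i - hE u s j := by linarith
    rw [ek] at w1' w2'
    obtain ⟨x1, x2, x3, x4, x5, k1, k2, k3, k4, k5, hx, e1, e2⟩ :=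
      geo a b c d u (hE u s i) (hE u s j) (Nat.cast_nonneg _) (by exact_mod_cast hc)
        (by exact_mod_cast hcd) (by exact_mod_cast hdu) (by exact_mod_cast hau)
        (Nat.cast_nonneg _) (Nat.cast_nonneg _)
        (by have : (0 : ℝ) ≤ hE u s k := Nat.cast_nonneg _
            linarith) w1' w2'
    let F : ℕ → ℕ → Fin 3 → ℕ := fun α β l => if l = i then α else if l = j then β else u - α - β
    have F1 : ∀ α β, F α β i = α := by intro α β; simp [F]
    have F2 : ∀ α β, F α β j = β := by intro α β; simp [F, hij.symm]
    have F3 : ∀ α β, F α β k = u - α - β := by intro α β; simp [F, hik.symm, hjk.symm]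
    have hF : ∀ α β, implicitPoint i j u α β = ((F α β 0 : ℝ), (F α β 1 : ℝ)) := fun α β =>
      implicitPoint_eq i j k hij hik hjk u α β (F α β) (F1 _ _) (F2 _ _) (F3 _ _)
    have hl : ∀ l, (hE u s l : ℝ) = x1 * F b 0 l + x2 * F d (u - d) l + x3 * F c (u - c) l +
        x4 * F 0 (u - a) l + x5 * F 0 0 l := by
      intro l
      rcases univ_ijk i j k hij hik hjk l with hl | hl | hl
      · rw [hl]; simp only [F1]; rw [e1]; push_cast; ring
      · rw [hl]; simp only [F2]; rw [e2]
        push_cast [Nat.cast_sub hdu.le, Nat.cast_sub (hcd.trans hdu.le), Nat.cast_sub hau]; ring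
      · rw [hl]; simp only [F3]
        have t1 : u - d - (u - d) = 0 := by omega
        have t2 : u - c - (u - c) = 0 := by omega
        have t3 : u - 0 - (u - a) = a := by omega
        have t4 : u - b - 0 = u - b := by omega
        rw [t1, t2, t3, t4, ek, e1, e2]
        push_cast [Nat.cast_sub hbu.le]
        have : x5 = 1 - x1 - x2 - x3 - x4 := by linarith
        rw [this]; simp; ring
    have hp : (fun d : Fin 2 →₀ ℕ => ((d 0 : ℝ), (d 1 : ℝ))) s =
        x1 • implicitPoint i j u b 0 + x2 • implicitPoint i j u d (u - d) +
        x3 • implicitPoint i j u c (u - c) + x4 • implicitPoint i j u 0 (u - a) +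
        x5 • implicitPoint i j u 0 0 := by
      change ((s 0 : ℝ), (s 1 : ℝ)) = _
      rw [hpt]
      simp only [hF, Prod.smul_mk, Prod.mk_add_mk, smul_eq_mul]
      rw [← hl, ← hl]
    rw [hp]
    apply five_mem _ (convex_convexHull ℝ _) <;> first | assumption | skip
    all_goals
      apply subset_convexHull
      simp
  · apply convexHull_mono
    have key : ∀ α β, (∃ s ∈ φ.support, hE u s i = α ∧ hE u s j = β ∧ hE u s k = u - α - β) →
        implicitPoint i j u α β ∈
          (fun d : Fin 2 →₀ ℕ => ((d 0 : ℝ), (d 1 : ℝ))) '' (φ.support : Set (Fin 2 →₀ ℕ)) := by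
      rintro α β ⟨s, hs, q1, q2, q3⟩
      refine ⟨s, hs, ?_⟩
      rw [implicitPoint_eq i j k hij hik hjk u α β (hE u s) q1 q2 q3]
      exact hpt s
    intro p hp
    simp only [Set.mem_insert_iff, Set.mem_singleton_iff] at hp
    rcases hp with rfl | rfl | rfl | rfl | rfl <;> apply key
    · obtain ⟨s, hs, q1, q2⟩ := h.v1
      have := hsum s hs
      exact ⟨s, hs, by omega, by omega, by omega⟩
    · obtain ⟨s, hs, q1, q2⟩ := h.v2
      have := hsum s hs
      exact ⟨s, hs, by omega, by omega, by omega⟩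
    · obtain ⟨s, hs, q1, q2⟩ := h.v3
      have := hsum s hs
      exact ⟨s, hs, by omega, by omega, by omega⟩
    · obtain ⟨s, hs, q1, q2⟩ := h.v4
      have := hsum s hs
      exact ⟨s, hs, by omega, by omega, by omega⟩
    · obtain ⟨s, hs, q1, q2⟩ := h.v5
      have := hsum s hs
      exact ⟨s, hs, by omega, by omega, by omega⟩

end

section
open Polynomial

lemma polyOfCoeffs_coeff (S : Finset ℕ) (c : {s // s ∈ S} → ℂ) (n : ℕ) :
    (polyOfCoeffs S c).coeff n = if h : n ∈ S then c ⟨n, h⟩ else 0 := by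
  rw [polyOfCoeffs, finsetSum_coeff]
  simp only [coeff_C_mul_X_pow]
  split_ifs with h
  · rw [Finset.sum_eq_single_of_mem ⟨n, h⟩ (Finset.mem_attach _ _)]
    · simp
    · intro b _ hb
      rw [if_neg]
      intro hn
      exact hb (Subtype.ext hn.symm)
  · apply Finset.sum_eq_zero
    intro b _
    rw [if_neg]
    rintro rfl
    exact h b.2

/-- The shifted polynomial with coefficients `c`. -/
noncomputable def shifted {R : Type*} [CommRing R] (S : Finset ℕ) (hS : S.Nonempty)
    (c : {s // s ∈ S} → R) : R[X] :=
  ∑ s ∈ S.attach, C (c s) * X ^ ((s : ℕ) - S.min' hS)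

lemma shifted_congr {R : Type*} [CommRing R] (S : Finset ℕ) (hS : S.Nonempty)
    (c c' : {s // s ∈ S} → R) (h : ∀ s, c s = c' s) : shifted S hS c = shifted S hS c' := by
  rw [funext h]

lemma shifted_map {R R' : Type*} [CommRing R] [CommRing R'] (S : Finset ℕ) (hS : S.Nonempty)
    (c : {s // s ∈ S} → R) (f : R →+* R') :
    (shifted S hS c).map f = shifted S hS (fun s => f (c s)) := by
  simp [shifted, Polynomial.map_sum]

lemma shifted_natDegree {R : Type*} [CommRing R] (S : Finset ℕ) (hS : S.Nonempty)
    (c : {s // s ∈ S} → R) : (shifted S hS c).natDegree ≤ S.max' hS - S.min' hS := by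
  refine natDegree_sum_le_of_forall_le _ _ fun s _ => (natDegree_C_mul_X_pow_le _ _).trans ?_
  have := S.le_max' s s.2
  omega

lemma shifted_mul (S : Finset ℕ) (hS : S.Nonempty) (c : {s // s ∈ S} → ℂ) :
    polyOfCoeffs S c = X ^ S.min' hS * shifted S hS c := by
  rw [polyOfCoeffs, shifted, Finset.mul_sum]
  refine Finset.sum_congr rfl fun s _ => ?_
  have := S.min'_le s s.2
  rw [mul_left_comm, ← pow_add, Nat.add_sub_cancel' this]

lemma shifted_single {R : Type*} [CommRing R] (S : Finset ℕ) (hS : S.Nonempty) (m : ℕ)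
    (hm : m ∈ S) : shifted S hS (fun s => if (s : ℕ) = m then (1 : R) else 0) =
      X ^ (m - S.min' hS) := by
  rw [shifted, Finset.sum_eq_single_of_mem ⟨m, hm⟩ (Finset.mem_attach _ _)]
  · simp
  · intro b _ hb
    rw [if_neg]
    · simp
    · intro h; exact hb (Subtype.ext h)

section
variable (S : Fin 3 → Finset ℕ) (hne : ∀ i, (S i).Nonempty)

/-- generic resultant -/
noncomputable def gres (l l' : Fin 3) : MvPolynomial (Σ i : Fin 3, {s // s ∈ S i}) ℂ :=
  resultant (shifted (S l) (hne l) (fun s => MvPolynomial.X ⟨l, s⟩))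
    (shifted (S l') (hne l') (fun s => MvPolynomial.X ⟨l', s⟩))
    ((S l).max' (hne l) - (S l).min' (hne l)) ((S l').max' (hne l') - (S l').min' (hne l'))

lemma eval_gres (l l' : Fin 3) (c : (Σ i : Fin 3, {s // s ∈ S i}) → ℂ) :
    MvPolynomial.eval c (gres S hne l l') =
      resultant (shifted (S l) (hne l) (fun s => c ⟨l, s⟩))
        (shifted (S l') (hne l') (fun s => c ⟨l', s⟩))
        ((S l).max' (hne l) - (S l).min' (hne l))
        ((S l').max' (hne l') - (S l').min' (hne l')) := by
  rw [gres, ← resultant_map_map, shifted_map, shifted_map]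
  rw [shifted_congr _ _ _ (fun s => c ⟨l, s⟩) (fun s => MvPolynomial.eval_X _),
    shifted_congr _ _ _ (fun s => c ⟨l', s⟩) (fun s => MvPolynomial.eval_X _)]

lemma gres_ne_zero (l l' : Fin 3) (h : l ≠ l') : gres S hne l l' ≠ 0 := by
  intro h0
  have := eval_gres S hne l l' (fun x => if x.1 = l then
    (if (x.2 : ℕ) = (S l).max' (hne l) then 1 else 0) else
    (if (x.2 : ℕ) = (S l').min' (hne l') then 1 else 0))
  rw [h0, map_zero] at this
  rw [shifted_congr (S l) _ _ (fun s => if (s : ℕ) = (S l).max' (hne l) then 1 else 0)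
      (fun s => if_pos rfl),
    shifted_congr (S l') _ _ (fun s => if (s : ℕ) = (S l').min' (hne l') then 1 else 0)
      (fun s => if_neg h.symm)] at this
  rw [shifted_single _ _ _ (Finset.max'_mem _ _), shifted_single _ _ _ (Finset.min'_mem _ _),
    Nat.sub_self, pow_zero, resultant_one_right] at this
  simp at this

lemma no_common (l l' : Fin 3) (c : (Σ i : Fin 3, {s // s ∈ S i}) → ℂ) (hc : ∀ x, c x ≠ 0)
    (h : MvPolynomial.eval c (gres S hne l l') ≠ 0) (τ : ℂ) (hτ : τ ≠ 0)
    (h1 : (polyOfCoeffs (S l) (fun s => c ⟨l, s⟩)).eval τ = 0) :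
    (polyOfCoeffs (S l') (fun s => c ⟨l', s⟩)).eval τ ≠ 0 := by
  intro h2
  rw [shifted_mul _ (hne _), eval_mul, eval_pow, eval_X] at h1 h2
  replace h1 := (mul_eq_zero.1 h1).resolve_left (pow_ne_zero _ hτ)
  replace h2 := (mul_eq_zero.1 h2).resolve_left (pow_ne_zero _ hτ)
  rw [eval_gres] at h
  by_cases hd : (S l).max' (hne l) - (S l).min' (hne l) = 0
  · -- constant polynomial
    have hall : ∀ s ∈ S l, s = (S l).min' (hne l) := by
      intro s hs
      have := (S l).min'_le s hs
      have := (S l).le_max' s hs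
      omega
    have hm := (S l).min'_mem (hne l)
    have hs : shifted (S l) (hne l) (fun s => c ⟨l, s⟩) = C (c ⟨l, ⟨_, hm⟩⟩) := by
      rw [shifted, Finset.sum_eq_single_of_mem ⟨_, hm⟩ (Finset.mem_attach _ _)]
      · simp
      · intro b _ hb
        exact absurd (Subtype.ext (hall b b.2)) hb
    rw [hs, eval_C] at h1
    exact hc _ h1
  · obtain ⟨p, q, -, -, e⟩ := exists_mul_add_mul_eq_C_resultant _ _
      (shifted_natDegree (S l) (hne l) (fun s => c ⟨l, s⟩))
      (shifted_natDegree (S l') (hne l') (fun s => c ⟨l', s⟩)) (Or.inl hd)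
    have := congrArg (eval τ) e
    rw [eval_add, eval_mul, eval_mul, h1, h2, eval_C] at this
    apply h
    rw [← this]; ring

end

lemma poly_natDegree (S : Finset ℕ) (hS : S.Nonempty) (c : {s // s ∈ S} → ℂ) (hc : ∀ x, c x ≠ 0) :
    (polyOfCoeffs S c).natDegree = S.max' hS := by
  apply natDegree_eq_of_le_of_coeff_ne_zero
  · rw [natDegree_le_iff_coeff_eq_zero]
    intro n hn
    rw [polyOfCoeffs_coeff, dif_neg]
    intro h
    have := S.le_max' n h
    omega
  · rw [polyOfCoeffs_coeff, dif_pos (S.max'_mem hS)]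
    exact hc _

lemma poly_coeff_ne (S : Finset ℕ) (c : {s // s ∈ S} → ℂ) (hc : ∀ x, c x ≠ 0) (n : ℕ) (h : n ∈ S) :
    (polyOfCoeffs S c).coeff n ≠ 0 := by
  rw [polyOfCoeffs_coeff, dif_pos h]; exact hc _

lemma poly_coeff_lt (S : Finset ℕ) (hS : S.Nonempty) (c : {s // s ∈ S} → ℂ) (n : ℕ)
    (h : n < S.min' hS) : (polyOfCoeffs S c).coeff n = 0 := by
  rw [polyOfCoeffs_coeff, dif_neg]
  intro hn
  have := S.min'_le n hn
  omega

theorem main_aux (S : Fin 3 → Finset ℕ) (hne : ∀ i, (S i).Nonempty)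
    (hgcd : ((S 0 ∪ S 1 ∪ S 2).filter (fun s => s ≠ 0)).gcd id = 1)
    (u : ℕ)
    (i j k : Fin 3) (hij : i ≠ j) (hik : i ≠ k) (hjk : j ≠ k)
    (hiL : 0 < (S i).min' (hne i)) (hiR : (S i).max' (hne i) = u)
    (hjL : (S j).min' (hne j) = 0) (hjR : (S j).max' (hne j) < u)
    (hkL : 0 < (S k).min' (hne k)) (hkR : (S k).max' (hne k) < u) :
    ∃ G : MvPolynomial (Σ i : Fin 3, {s // s ∈ S i}) ℂ, G ≠ 0 ∧
      ∀ c : (Σ i : Fin 3, {s // s ∈ S i}) → ℂ, MvPolynomial.eval c G ≠ 0 →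
        ∀ φ : MvPolynomial (Fin 2) ℂ, Irreducible φ → vanishesSame S c φ →
          newtonPolygon φ = convexHull ℝ
            {implicitPoint i j u ((S j).max' (hne j)) 0,
             implicitPoint i j u ((S k).max' (hne k)) (u - (S k).max' (hne k)),
             implicitPoint i j u ((S k).min' (hne k)) (u - (S k).min' (hne k)),
             implicitPoint i j u 0 (u - (S i).min' (hne i)),
             implicitPoint i j u 0 0} := by
  refine ⟨(∏ x, MvPolynomial.X x) * gres S hne i j * gres S hne k j * gres S hne i k, ?_, ?_⟩
  · refine mul_ne_zero (mul_ne_zero (mul_ne_zero ?_ (gres_ne_zero S hne _ _ hij))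
      (gres_ne_zero S hne _ _ hjk.symm)) (gres_ne_zero S hne _ _ hik)
    exact Finset.prod_ne_zero_iff.2 fun x _ => MvPolynomial.X_ne_zero x
  intro c hG φ hφ hv
  rw [map_mul, map_mul, map_mul, map_prod] at hG
  have g3 := right_ne_zero_of_mul hG
  have hG2 := left_ne_zero_of_mul hG
  have g2 := right_ne_zero_of_mul hG2
  have hG3 := left_ne_zero_of_mul hG2
  have g1 := right_ne_zero_of_mul hG3
  have hc : ∀ x, c x ≠ 0 := by
    intro x
    have := Finset.prod_ne_zero_iff.1 (left_ne_zero_of_mul hG3) x (Finset.mem_univ _)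
    simpa using this
  let P : Fin 3 → ℂ[X] := fun l => polyOfCoeffs (S l) (fun s => c ⟨l, s⟩)
  have hdeg : ∀ l, (P l).natDegree = (S l).max' (hne l) := fun l =>
    poly_natDegree _ (hne l) _ (fun _ => hc _)
  have hcf : ∀ l s, s ∈ S l → (P l).coeff s ≠ 0 := fun l s hs =>
    poly_coeff_ne _ _ (fun _ => hc _) s hs
  have hclt : ∀ l s, s < (S l).min' (hne l) → (P l).coeff s = 0 := fun l s hs =>
    poly_coeff_lt _ (hne l) _ s hs
  have hPne : ∀ l, P l ≠ 0 := by
    intro l h0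
    apply hcf l _ (Finset.min'_mem _ (hne l))
    rw [h0, coeff_zero]
  have hB0 : (P j).eval 0 ≠ 0 := by
    rw [← coeff_zero_eq_eval_zero]
    apply hcf
    rw [← hjL]; exact Finset.min'_mem _ _
  have good : Good (P i) (P j) (P k) u := by
    refine ⟨by rw [hdeg, hiR], by rw [hdeg]; exact hjR, by rw [hdeg]; exact hkR, ?_, ?_, hB0,
      hPne k, ?_, ?_, ?_, ?_⟩
    · rw [← coeff_zero_eq_eval_zero]; exact hclt _ _ hiL
    · rw [← coeff_zero_eq_eval_zero]; exact hclt _ _ hkL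
    · intro τ h
      by_cases hτ : τ = 0
      · rw [hτ]; exact hB0
      · exact no_common S hne i j c hc g1 τ hτ h
    · intro τ h
      by_cases hτ : τ = 0
      · rw [hτ]; exact hB0
      · exact no_common S hne k j c hc g2 τ hτ h
    · intro τ hτ h
      exact no_common S hne i k c hc g3 τ hτ h
    · intro ζ z1 z2 z3
      have hz : ∀ l, ∀ s ∈ S l, ζ ^ s = 1 := by
        intro l s hs
        have := hcf l s hs
        rcases univ_ijk i j k hij hik hjk l with rfl | rfl | rfl
        · exact z1 s this
        · exact z2 s this
        · exact z3 s this
      have hd : orderOf ζ ∣ ((S 0 ∪ S 1 ∪ S 2).filter (fun s => s ≠ 0)).gcd id := by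
        apply Finset.dvd_gcd
        intro s hs
        rw [Finset.mem_filter, Finset.mem_union, Finset.mem_union] at hs
        rw [id, orderOf_dvd_iff_pow_eq_one]
        rcases hs.1 with (h | h) | h
        · exact hz _ s h
        · exact hz _ s h
        · exact hz _ s h
      rw [hgcd, Nat.dvd_one, orderOf_eq_one_iff] at hd
      exact hd
  have hY2 : algebraMap ℂ[X] (RatFunc ℂ) (P 2) ≠ 0 := by
    rw [Ne, FaithfulSMul.algebraMap_eq_zero_iff]; exact hPne 2
  have hv' : hev φ (fun l => algebraMap ℂ[X] (RatFunc ℂ) (P l)) = 0 := by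
    rw [hev_div _ _ hY2]
    have : MvPolynomial.aeval ![algebraMap ℂ[X] (RatFunc ℂ) (P 0) / algebraMap ℂ[X] (RatFunc ℂ) (P 2),
      algebraMap ℂ[X] (RatFunc ℂ) (P 1) / algebraMap ℂ[X] (RatFunc ℂ) (P 2)] φ = 0 := hv
    rw [this, mul_zero]
  have hmm : ∀ l, (S l).min' (hne l) ≤ (S l).max' (hne l) := fun l =>
    Finset.min'_le _ _ (Finset.max'_mem _ _)
  have hi := hmm i
  have hk := hmm k
  have info := good.suppInfo hφ hij hik hjk hv' ((S i).min' (hne i)) ((S j).max' (hne j))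
    ((S k).min' (hne k)) ((S k).max' (hne k)) (by omega) (by omega) (hclt i)
    (hcf i _ (Finset.min'_mem _ _)) (hdeg j) (hclt k) (hcf k _ (Finset.min'_mem _ _)) (hdeg k)
  exact info.polygon hij hik hjk (by omega) hjR hkL hk hkR

end

/-- Case (3B): the implicit Newton polygon is the convex hull of the five stated
implicit points. -/
theorem implicit_polygon_case3B (S : Fin 3 → Finset ℕ) (hne : ∀ i, (S i).Nonempty)
    (hgcd : ((S 0 ∪ S 1 ∪ S 2).filter (fun s => s ≠ 0)).gcd id = 1)
    (u : ℕ)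
    (hu : u = max ((S 0).max' (hne 0)) (max ((S 1).max' (hne 1)) ((S 2).max' (hne 2))))
    (hu1 : 1 ≤ u)
    (i j k : Fin 3) (hij : i ≠ j) (hik : i ≠ k) (hjk : j ≠ k)
    (hiL : 0 < (S i).min' (hne i)) (hiR : (S i).max' (hne i) = u)
    (hjL : (S j).min' (hne j) = 0) (hjR : (S j).max' (hne j) < u)
    (hkL : 0 < (S k).min' (hne k)) (hkR : (S k).max' (hne k) < u) :
    ∃ G : MvPolynomial (Σ i : Fin 3, {s // s ∈ S i}) ℂ, G ≠ 0 ∧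
      ∀ c : (Σ i : Fin 3, {s // s ∈ S i}) → ℂ, MvPolynomial.eval c G ≠ 0 →
        ∀ φ : MvPolynomial (Fin 2) ℂ, Irreducible φ → vanishesSame S c φ →
          newtonPolygon φ = convexHull ℝ
            {implicitPoint i j u ((S j).max' (hne j)) 0,
             implicitPoint i j u ((S k).max' (hne k)) (u - (S k).max' (hne k)),
             implicitPoint i j u ((S k).min' (hne k)) (u - (S k).min' (hne k)),
             implicitPoint i j u 0 (u - (S i).min' (hne i)),
             implicitPoint i j u 0 0} := by
  exact main_aux S hne hgcd u i j k hij hik hjk hiL hiR hjL hjR hkL hkR
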